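/- arXiv:2106.09892 — 4 statements merged into one kernel-verified Lean document; each statement's English description precedes it below -/
import Mathlib

section
/- Let λ be an arc in ℝ², let a and a' be two distinct points of λ, let λ_{a,a'} denote the (closed) subarc of λ with endpoints a and a', and let Ω be an open neighborhood of λ_{a,a'} in ℝ². Then there is an arc J ⊆ Ω with endpoints a and a' such that J ∩ λ = {a, a'} and the open arc J \ {a, a'} is a C^∞-smooth open arc. -/
open Set MvPolynomial Topology MeasureTheory

noncomputable section

/-- The polynomial hull of a set `X ⊆ ℂ^N`: points where every polynomial in the
coordinates is dominated by its supremum over `X`. -/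
def polyHull {N : ℕ} (X : Set (Fin N → ℂ)) : Set (Fin N → ℂ) :=
  {z | ∀ p : MvPolynomial (Fin N) ℂ, ‖eval z p‖ ≤ ⨆ x ∈ X, ‖eval x p‖}

/-- A set is polynomially convex if it equals its polynomial hull. -/
def IsPolynomiallyConvex {N : ℕ} (X : Set (Fin N → ℂ)) : Prop :=
  polyHull X = X

/-- `J` is an arc from `a` to `b`: the image of an injective continuous map on `[0,1]`
(equivalently, in a Hausdorff space, a subset homeomorphic to `[0,1]`). -/
def IsArcFrom {α : Type*} [TopologicalSpace α] (J : Set α) (a b : α) : Prop :=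
  ∃ γ : ℝ → α, ContinuousOn γ (Icc 0 1) ∧ InjOn γ (Icc 0 1) ∧
    γ '' Icc 0 1 = J ∧ γ 0 = a ∧ γ 1 = b

/-- `J` is an arc: a subset homeomorphic to the closed unit interval. -/
def IsArc {α : Type*} [TopologicalSpace α] (J : Set α) : Prop :=
  ∃ a b, IsArcFrom J a b

/-- `J` is a simple closed curve: a subset homeomorphic to the unit circle. -/
def IsSimpleClosedCurve {α : Type*} [TopologicalSpace α] (J : Set α) : Prop :=
  ∃ γ : Circle → α, Continuous γ ∧ Function.Injective γ ∧ Set.range γ = J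

/-- A `C^∞`-smooth open arc: the image of an injective `C^∞` map on an open interval,
with nowhere vanishing derivative, that is a homeomorphism onto its image. -/
def IsSmoothOpenArc {E : Type*} [NormedAddCommGroup E] [NormedSpace ℝ E]
    (A : Set E) : Prop :=
  ∃ (a b : ℝ) (γ : ℝ → E), a < b ∧ ContDiffOn ℝ (⊤ : ℕ∞) γ (Ioo a b) ∧
    (∀ t ∈ Ioo a b, derivWithin γ (Ioo a b) t ≠ 0) ∧
    InjOn γ (Ioo a b) ∧
    IsEmbedding ((Ioo a b).restrict γ) ∧
    γ '' Ioo a b = A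

/-- `P(X) = C(X)`: every continuous function on `X` is a uniform limit of polynomials. -/
def PolyEqContinuous {N : ℕ} (X : Set (Fin N → ℂ)) : Prop :=
  ∀ f : (Fin N → ℂ) → ℂ, ContinuousOn f X → ∀ δ : ℝ, 0 < δ →
    ∃ p : MvPolynomial (Fin N) ℂ, ∀ x ∈ X, ‖f x - eval x p‖ < δ

/-- `L` is a complex affine line in `ℂ^N`. -/
def IsComplexAffineLine {N : ℕ} (L : Set (Fin N → ℂ)) : Prop :=
  ∃ (z₀ v : Fin N → ℂ), v ≠ 0 ∧ L = {z | ∃ t : ℂ, z = z₀ + t • v}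

/-!
Identify the plane with `ℂ` and let `A` be the arc. By the logarithm criterion of Eilenberg and
Borsuk, an arc does not separate the plane. Janiszewski's gluing argument, in the same language of
continuous logarithms, localizes this: a component of `Ω \ A` that accumulates at a point of `A`
also accumulates at the next points of `A`, as long as the arc stays in `Ω`, and the points off `A`
near a point `p` of `A` lie in components that accumulate at `p`. So some component of `Ω \ A`
accumulates at both `a` and `a'`, and from a point of it one can travel to either of them through
convex open cells shrinking to the target.

Among these cells one extracts a two-sided infinite chain in which only neighbors meet. The
polygonal line through points chosen in the successive intersections is then injective, and remains
so after its corners are rounded; the shrinking of the cells makes it converge to `a` and `a'`.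
-/

namespace PlaneArc

open Filter Metric

/-- `HasContinuousLog f K`: the function `f` has a continuous logarithm on the set `K`. -/
def HasContinuousLog {X : Type*} [TopologicalSpace X] (f : X → ℂ) (K : Set X) : Prop :=
  ∃ g : X → ℂ, ContinuousOn g K ∧ ∀ z ∈ K, Complex.exp (g z) = f z

section ContinuousLog

variable {X : Type*} [TopologicalSpace X]

lemma HasContinuousLog.mono {f : X → ℂ} {K L : Set X} (h : HasContinuousLog f K) (hLK : L ⊆ K) :
    HasContinuousLog f L := by
  obtain ⟨g, hg, hexp⟩ := h
  exact ⟨g, hg.mono hLK, fun z hz => hexp z (hLK hz)⟩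

lemma HasContinuousLog.comp {Y : Type*} [TopologicalSpace Y] {f : X → ℂ} {K : Set X}
    (h : HasContinuousLog f K) {φ : Y → X} {L : Set Y} (hφ : ContinuousOn φ L)
    (hLK : MapsTo φ L K) : HasContinuousLog (f ∘ φ) L := by
  obtain ⟨g, hg, hexp⟩ := h
  exact ⟨g ∘ φ, hg.comp hφ hLK, fun z hz => hexp _ (hLK hz)⟩

lemma HasContinuousLog.congr {f f' : X → ℂ} {K : Set X} (h : HasContinuousLog f K)
    (hff' : EqOn f f' K) : HasContinuousLog f' K := by
  obtain ⟨g, hg, hexp⟩ := h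
  exact ⟨g, hg, fun z hz => (hexp z hz).trans (hff' hz)⟩

lemma hasContinuousLog_univ [SimplyConnectedSpace X] [LocallyPathConnectedSpace X]
    {f : X → ℂ} (hf : Continuous f) (hf₀ : ∀ x, f x ≠ 0) : HasContinuousLog f univ := by
  obtain ⟨x₀⟩ : Nonempty X := inferInstance
  obtain ⟨g, ⟨-, hg⟩, -⟩ := Complex.isCoveringMapOn_exp.existsUnique_continuousMap_lifts
    (⟨f, hf⟩ : C(X, ℂ)) (a₀ := x₀) (Complex.exp_log (hf₀ x₀)) (fun x => hf₀ x)
  exact ⟨g, g.continuous.continuousOn, fun x _ => congrFun hg x⟩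

lemma sub_eq_sub_of_exp_eq {S : Set X} (hS : IsPreconnected S) {g k : X → ℂ}
    (hg : ContinuousOn g S) (hk : ContinuousOn k S)
    (hexp : ∀ x ∈ S, Complex.exp (g x) = Complex.exp (k x)) {x y : X} (hx : x ∈ S) (hy : y ∈ S) :
    g x - k x = g y - k y := by
  have hone : ∀ z ∈ S, Complex.exp (g z - k z) = 1 := fun z hz => by
    rw [Complex.exp_sub, hexp z hz, div_self (Complex.exp_ne_zero _)]
  have hinj : IsLocallyInjective Complex.exp :=
    Complex.isCoveringMap_exp.isLocalHomeomorph.isLocallyInjective.comp_left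
      Subtype.val_injective
  exact (T2Space.isSeparatedMap Complex.exp).constOn_of_comp hinj hS (hg.sub hk)
    (fun z hz w hw => (hone z hz).trans (hone w hw).symm) hx hy

lemma HasContinuousLog.union {A B : Set X} (hA : IsClosed A) (hB : IsClosed B)
    (hAB : IsPreconnected (A ∩ B)) {f : X → ℂ} (hfA : HasContinuousLog f A)
    (hfB : HasContinuousLog f B) : HasContinuousLog f (A ∪ B) := by
  classical
  obtain ⟨g, hg, hgexp⟩ := hfA
  obtain ⟨k, hk, hkexp⟩ := hfB
  obtain ⟨c, hc, hgk⟩ : ∃ c : ℂ, Complex.exp c = 1 ∧ ∀ z ∈ A ∩ B, g z = k z + c := by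
    rcases (A ∩ B).eq_empty_or_nonempty with hempty | ⟨w, hw⟩
    · exact ⟨0, by simp, by simp [hempty]⟩
    have hexp : ∀ z ∈ A ∩ B, Complex.exp (g z) = Complex.exp (k z) := fun z hz => by
      rw [hgexp z hz.1, hkexp z hz.2]
    refine ⟨g w - k w, ?_, fun z hz => ?_⟩
    · rw [Complex.exp_sub, hexp w hw, div_self (Complex.exp_ne_zero _)]
    · rw [sub_eq_sub_of_exp_eq hAB (hg.mono inter_subset_left) (hk.mono inter_subset_right)
        hexp hw hz]
      ring
  have hpieceA : EqOn (A.piecewise g (k · + c)) g A := A.piecewise_eqOn _ _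
  have hpieceB : EqOn (A.piecewise g (k · + c)) (k · + c) B := fun z hz => by
    by_cases hzA : z ∈ A
    · rw [A.piecewise_eq_of_mem _ _ hzA, hgk z ⟨hzA, hz⟩]
    · rw [A.piecewise_eq_of_notMem _ _ hzA]
  refine ⟨A.piecewise g (k · + c), ?_, ?_⟩
  · exact (hg.congr hpieceA).union_of_isClosed ((hk.add_const c).congr hpieceB) hA hB
  · rintro z (hz | hz)
    · rw [hpieceA hz, hgexp z hz]
    · rw [hpieceB hz, Complex.exp_add, hc, mul_one, hkexp z hz]

end ContinuousLog

lemma not_hasContinuousLog_sphere (x : ℂ) {R : ℝ} (hR : 0 < R) :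
    ¬ HasContinuousLog (fun z => z - x) (sphere x R) := by
  rintro ⟨g, hg, hexp⟩
  have hmaps : MapsTo (circleMap x R) univ (sphere x R) :=
    fun θ _ => circleMap_mem_sphere x hR.le θ
  have hlift : ∀ θ ∈ univ, Complex.exp (g (circleMap x R θ)) =
      Complex.exp (Real.log R + θ * Complex.I) := fun θ hθ => by
    simp only [hexp _ (hmaps hθ), circleMap_sub_center, circleMap_zero, Complex.exp_add,
      ← Complex.ofReal_exp, Real.exp_log hR]
  have hconst := sub_eq_sub_of_exp_eq isPreconnected_univ
    (hg.comp (continuous_circleMap x R).continuousOn hmaps) (by fun_prop) hlift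
    (mem_univ 0) (mem_univ (2 * Real.pi))
  have hperiod : circleMap x R (2 * Real.pi) = circleMap x R 0 := by
    simpa using periodic_circleMap x R 0
  have him := congrArg Complex.im hconst
  simp [hperiod] at him
  linarith [Real.pi_pos]

lemma hasContinuousLog_div_of_disjoint_segment {K : Set ℂ} {x y : ℂ}
    (h : Disjoint (segment ℝ x y) K) : HasContinuousLog (fun z => (z - x) / (z - y)) K := by
  have hne : ∀ z ∈ K, z - y ≠ 0 := fun z hz => by
    rw [sub_ne_zero]
    rintro rfl
    exact h.notMem_of_mem_left (right_mem_segment ℝ _ _) hz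
  have hslit : ∀ z ∈ K, (z - x) / (z - y) ∈ Complex.slitPlane := fun z hz => by
    rw [Complex.mem_slitPlane_iff_not_le_zero, Complex.nonpos_iff]
    rintro ⟨hre, him⟩
    set r : ℝ := -((z - x) / (z - y)).re with hr
    have hr₀ : 0 ≤ r := by linarith
    have hquot : (z - x) / (z - y) = -(r : ℂ) := by
      apply Complex.ext <;> simp [hr, him]
    have hr₁ : (1 + r : ℂ) ≠ 0 := by exact_mod_cast (by linarith : (1 + r : ℝ) ≠ 0)
    rw [div_eq_iff (hne z hz)] at hquot
    refine h.notMem_of_mem_left ⟨1 / (1 + r), r / (1 + r), by positivity, by positivity,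
      by field_simp, ?_⟩ hz
    simp only [Complex.real_smul]
    push_cast
    field_simp
    linear_combination -hquot
  refine ⟨fun z => Complex.log ((z - x) / (z - y)), ?_, fun z hz => ?_⟩
  · exact ContinuousOn.clog (by fun_prop (disch := assumption)) hslit
  · exact Complex.exp_log (Complex.slitPlane_ne_zero (hslit z hz))

section CompactImage

variable {X Y : Type*} [TopologicalSpace X] [TopologicalSpace Y] [T2Space Y]
  {φ : X → Y} {S : Set X}

lemma isEmbedding_domRestrict (hS : IsCompact S) (hφ : ContinuousOn φ S) (hinj : InjOn φ S) :
    IsEmbedding (S.domRestrict φ) := by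
  have : CompactSpace S := isCompact_iff_compactSpace.1 hS
  exact ((continuousOn_iff_continuous_domRestrict.1 hφ).isClosedEmbedding
    (injOn_iff_injective.1 hinj)).isEmbedding

lemma continuousOn_invFunOn [Nonempty X] (hS : IsCompact S) (hφ : ContinuousOn φ S)
    (hinj : InjOn φ S) : ContinuousOn (Function.invFunOn φ S) (φ '' S) := by
  have hleft : LeftInvOn (Function.invFunOn φ S) φ S := hinj.leftInvOn_invFunOn
  refine continuousOn_iff_isClosed.2 fun T hT => ⟨φ '' (T ∩ S), ?_, ?_⟩
  · exact ((hS.inter_left hT).image_of_continuousOn (hφ.mono inter_subset_right)).isClosed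
  · rw [← hleft.image_inter', inter_eq_left.2 (image_mono inter_subset_right)]

end CompactImage

lemma hasContinuousLog_Icc {a b : ℝ} {f : ℝ → ℂ} (hf : ContinuousOn f (Icc a b))
    (hf₀ : ∀ u ∈ Icc a b, f u ≠ 0) : HasContinuousLog f (Icc a b) := by
  rcases lt_or_ge b a with hba | hab
  · exact ⟨0, by simp [hba]⟩
  refine ((hasContinuousLog_univ (f := IccExtend hab ((Icc a b).domRestrict f)) ?_
    fun u => hf₀ _ (projIcc a b hab u).2).mono (subset_univ _)).congr ?_
  · exact (continuousOn_iff_continuous_domRestrict.1 hf).Icc_extend'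
  · exact fun u hu => IccExtend_of_mem hab _ hu

lemma hasContinuousLog_image_Icc {X : Type*} [TopologicalSpace X] [T2Space X] {a b : ℝ}
    {γ : ℝ → X} (hγ : ContinuousOn γ (Icc a b)) (hinj : InjOn γ (Icc a b)) {f : X → ℂ}
    (hf : ContinuousOn f (γ '' Icc a b)) (hf₀ : ∀ z ∈ γ '' Icc a b, f z ≠ 0) :
    HasContinuousLog f (γ '' Icc a b) := by
  refine ((hasContinuousLog_Icc (hf.comp hγ (mapsTo_image _ _))
    fun u hu => hf₀ _ (mem_image_of_mem γ hu)).comp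
    (continuousOn_invFunOn isCompact_Icc hγ hinj)
    (surjOn_image γ _).mapsTo_invFunOn).congr fun z hz => ?_
  exact congrArg f ((surjOn_image γ _).rightInvOn_invFunOn hz)

lemma isPreconnected_setOf_lt_norm {R : ℝ} (hR : 0 < R) : IsPreconnected {z : ℂ | R < ‖z‖} := by
  have himage : {z : ℂ | R < ‖z‖} = Complex.exp '' {z | Real.log R < z.re} := by
    ext z
    constructor
    · intro hz
      refine ⟨Complex.log z, ?_, Complex.exp_log (norm_pos_iff.1 (hR.trans hz))⟩
      simpa only [mem_ofPred_eq, Complex.log_re] using Real.log_lt_log hR hz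
    · rintro ⟨w, hw, rfl⟩
      simpa only [mem_ofPred_eq, Complex.norm_exp] using (Real.log_lt_iff_lt_exp hR).1 hw
  rw [himage]
  exact (convex_halfSpace_re_gt _).isPreconnected.image _ Complex.continuous_exp.continuousOn

section Components

variable {X : Type*} [TopologicalSpace X]

lemma frontier_connectedComponentIn_subset [LocallyConnectedSpace X] {O : Set X}
    (hO : IsOpen O) (x : X) : frontier (connectedComponentIn O x) ⊆ Oᶜ := by
  intro z hz hzO
  obtain ⟨w, hwz, hwx⟩ := mem_closure_iff.1 (frontier_subset_closure hz) _
    hO.connectedComponentIn (mem_connectedComponentIn hzO)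
  have hzx : z ∈ connectedComponentIn O x := by
    rw [connectedComponentIn_eq hwx, ← connectedComponentIn_eq hwz]
    exact mem_connectedComponentIn hzO
  rw [hO.connectedComponentIn.frontier_eq] at hz
  exact hz.2 hzx

lemma subset_connectedComponentIn_of_inter_closure_subset [LocallyConnectedSpace X]
    {O P : Set X} (hO : IsOpen O) (hP : IsPreconnected P) {x : X}
    (hPx : (P ∩ connectedComponentIn O x).Nonempty)
    (hPO : P ∩ closure (connectedComponentIn O x) ⊆ O) : P ⊆ connectedComponentIn O x := by
  refine hP.subset_of_closure_inter_subset hO.connectedComponentIn hPx fun z hz => ?_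
  by_contra hzx
  refine frontier_connectedComponentIn_subset hO x ?_ (hPO hz.symm)
  rw [hO.connectedComponentIn.frontier_eq]
  exact ⟨hz.1, hzx⟩

lemma subset_connectedComponentIn_or_disjoint {O P : Set X} (hP : IsPreconnected P) (hPO : P ⊆ O)
    (x : X) : P ⊆ connectedComponentIn O x ∨ Disjoint P (connectedComponentIn O x) := by
  rw [or_iff_not_imp_right, not_disjoint_iff]
  rintro ⟨w, hwP, hwx⟩
  rw [connectedComponentIn_eq hwx]
  exact hP.subset_connectedComponentIn hwP hPO

end Components

lemma exists_log_glued_along_frontier {K U : Set ℂ} {x y : ℂ} (hK : IsClosed K)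
    (hlog : HasContinuousLog (fun z => (z - x) / (z - y)) K) (hU : frontier U ⊆ K)
    (hx : x ∈ U) (hy : y ∉ U) (hyK : y ∉ K) :
    ∃ G H : ℂ → ℂ, Continuous G ∧ Continuous H ∧
      (∀ z ∈ U, Complex.exp (H z) = (z - y) * Complex.exp (G z)) ∧
      ∀ z ∉ U, Complex.exp (H z) = z - x := by
  classical
  obtain ⟨g, hg, hexp⟩ := hlog
  obtain ⟨G, hG⟩ := ContinuousMap.exists_restrict_eq hK
    (⟨K.domRestrict g, continuousOn_iff_continuous_domRestrict.1 hg⟩ : C(K, ℂ))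
  have hGg : ∀ z ∈ K, G z = g z := fun z hz => congrArg (fun f : C(K, ℂ) => f ⟨z, hz⟩) hG
  let h : ℂ → ℂ := fun z => if z ∈ U then (z - y) * Complex.exp (G z) else z - x
  have hcont : Continuous h := by
    refine Continuous.if (fun z hz => ?_) (by fun_prop) (by fun_prop)
    have hzy : z - y ≠ 0 := sub_ne_zero.2 (ne_of_mem_of_not_mem (hU hz) hyK)
    rw [hGg z (hU hz), hexp z (hU hz), mul_div_cancel₀ _ hzy]
  have hne : ∀ z, h z ≠ 0 := fun z => by
    by_cases hz : z ∈ U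
    · simpa [h, hz, sub_eq_zero] using ne_of_mem_of_not_mem hz hy
    · simpa [h, hz, sub_eq_zero] using (ne_of_mem_of_not_mem hx hz).symm
  obtain ⟨H, hH, hHh⟩ := hasContinuousLog_univ hcont hne
  refine ⟨G, H, G.continuous, continuousOn_univ.1 hH, fun z hz => ?_, fun z hz => ?_⟩
  · rw [hHh z (mem_univ z)]; exact if_pos hz
  · rw [hHh z (mem_univ z)]; exact if_neg hz

/- The logarithm of `(z - x) / (z - y)` would glue `z - y` on the component of `x` to `z - x` off
it, up to a factor with a logarithm. One of the two functions prevails near infinity, where it has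
no logarithm. -/
theorem mem_connectedComponentIn_compl_of_hasContinuousLog {K : Set ℂ} (hK : IsCompact K)
    {x y : ℂ} (hx : x ∉ K) (hy : y ∉ K)
    (hlog : HasContinuousLog (fun z => (z - x) / (z - y)) K) :
    y ∈ connectedComponentIn Kᶜ x := by
  by_contra hyU
  set U := connectedComponentIn Kᶜ x
  have hU : frontier U ⊆ K := by
    simpa only [compl_compl] using
      frontier_connectedComponentIn_subset hK.isClosed.isOpen_compl x
  obtain ⟨G, H, hG, hH, hin, hout⟩ := exists_log_glued_along_frontier hK.isClosed hlog hU
    (mem_connectedComponentIn hx) hyU hy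
  obtain ⟨R, hR, hKR⟩ := hK.isBounded.exists_pos_norm_le
  have hfar : {z : ℂ | R < ‖z‖} ⊆ Kᶜ := fun z hz hzK => (hKR z hzK).not_gt hz
  have hsphere : ∀ w : ℂ, sphere w (R + ‖w‖ + 1) ⊆ {z : ℂ | R < ‖z‖} := fun w z hz => by
    have := norm_sub_le z w
    rw [mem_sphere_iff_norm] at hz
    simp only [mem_ofPred_eq]
    linarith
  rcases subset_connectedComponentIn_or_disjoint (isPreconnected_setOf_lt_norm hR) hfar x
    with hsub | hdisj
  · refine not_hasContinuousLog_sphere y (R := R + ‖y‖ + 1) (by positivity)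
      ⟨fun z => H z - G z, by fun_prop, fun z hz => ?_⟩
    rw [Complex.exp_sub, hin z (hsub (hsphere y hz)),
      mul_div_cancel_right₀ _ (Complex.exp_ne_zero _)]
  · exact not_hasContinuousLog_sphere x (R := R + ‖x‖ + 1) (by positivity)
      ⟨H, hH.continuousOn, fun z hz => hout z (hdisj.notMem_of_mem_left (hsphere x hz))⟩

lemma isCompact_image_Icc {X : Type*} [TopologicalSpace X] {γ : ℝ → X} {a b c d : ℝ}
    (hγ : ContinuousOn γ (Icc a b)) (hac : a ≤ c) (hdb : d ≤ b) : IsCompact (γ '' Icc c d) :=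
  isCompact_Icc.image_of_continuousOn (hγ.mono (Icc_subset_Icc hac hdb))

lemma mem_connectedComponentIn_compl_arc_union {γ : ℝ → ℂ} {a b : ℝ}
    (hγ : ContinuousOn γ (Icc a b)) (hinj : InjOn γ (Icc a b)) {B : Set ℂ} (hB : IsCompact B)
    (hAB : IsPreconnected (γ '' Icc a b ∩ B)) {x y : ℂ} (hx : x ∉ γ '' Icc a b)
    (hy : y ∉ γ '' Icc a b) (hxyB : Disjoint (segment ℝ x y) B) :
    y ∈ connectedComponentIn (γ '' Icc a b ∪ B)ᶜ x := by
  have hA : IsCompact (γ '' Icc a b) := isCompact_Icc.image_of_continuousOn hγ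
  have hne : ∀ w ∉ γ '' Icc a b, ∀ z ∈ γ '' Icc a b, z - w ≠ 0 := fun w hw z hz =>
    sub_ne_zero.2 (ne_of_mem_of_not_mem hz hw)
  have hlogA : HasContinuousLog (fun z => (z - x) / (z - y)) (γ '' Icc a b) :=
    hasContinuousLog_image_Icc hγ hinj
      (ContinuousOn.div (by fun_prop) (by fun_prop) (hne y hy))
      fun z hz => div_ne_zero (hne x hx z hz) (hne y hy z hz)
  refine mem_connectedComponentIn_compl_of_hasContinuousLog (hA.union hB) ?_ ?_
    (hlogA.union hA.isClosed hB.isClosed hAB (hasContinuousLog_div_of_disjoint_segment hxyB))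
  · exact not_or_intro hx (hxyB.notMem_of_mem_left (left_mem_segment ℝ x y))
  · exact not_or_intro hy (hxyB.notMem_of_mem_left (right_mem_segment ℝ x y))

lemma exists_forall_Ioc_mem {X : Type*} [TopologicalSpace X] {γ : ℝ → X} {a b : ℝ}
    (hγ : ContinuousOn γ (Icc a b)) (hab : a ≤ b) {G : Set X} (hG : G ∈ 𝓝 (γ b)) :
    ∃ c < b, ∀ u ∈ Icc a b, c < u → γ u ∈ G := by
  obtain ⟨T, hT, hTG⟩ := mem_nhdsWithin_iff_exists_mem_nhds_inter.1
    (hγ b (right_mem_Icc.2 hab) hG)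
  obtain ⟨c, hcb, hcT⟩ := exists_Ioc_subset_of_mem_nhds hT (exists_lt b)
  exact ⟨c, hcb, fun u hu hcu => hTG ⟨hcT ⟨hcu, hu.2⟩, hu⟩⟩

lemma subset_ball_of_disjoint_sphere {X : Type*} [PseudoMetricSpace X] {S : Set X} {x : X} {R : ℝ}
    (hS : IsPreconnected S) (hSx : (S ∩ ball x R).Nonempty) (hSR : Disjoint S (sphere x R)) :
    S ⊆ ball x R := by
  refine hS.subset_of_closure_inter_subset isOpen_ball hSx ?_
  rintro z ⟨hzR, hzS⟩
  exact (mem_closedBall.1 (closure_ball_subset_closedBall hzR)).lt_of_ne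
    (hSR.notMem_of_mem_left hzS)

lemma exists_nhds_endpoint_subset_connectedComponentIn {γ : ℝ → ℂ} {a b : ℝ} (hab : a ≤ b)
    (hγ : ContinuousOn γ (Icc a b)) (hinj : InjOn γ (Icc a b)) {G : Set ℂ} (hG : G ∈ 𝓝 (γ b)) :
    ∃ V ∈ 𝓝 (γ b), ∀ x ∈ V \ γ '' Icc a b,
      V \ γ '' Icc a b ⊆ connectedComponentIn (G \ γ '' Icc a b) x := by
  obtain ⟨R, hR, hRG⟩ := Metric.mem_nhds_iff.1 hG
  obtain ⟨c, hcb, hcR⟩ := exists_forall_Ioc_mem hγ hab (ball_mem_nhds (γ b) hR)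
  have hcompact : IsCompact (γ '' Icc a c) := isCompact_image_Icc hγ le_rfl hcb.le
  have hbc : γ b ∉ γ '' Icc a c := by
    rw [hinj.mem_image_iff (Icc_subset_Icc_right hcb.le) (right_mem_Icc.2 hab)]
    exact fun h => h.2.not_gt hcb
  obtain ⟨r, hr, hrc⟩ := Metric.isOpen_iff.1 hcompact.isClosed.isOpen_compl _ hbc
  refine ⟨ball (γ b) (min r R), ball_mem_nhds _ (lt_min hr hR), ?_⟩
  rintro x ⟨hxV, hxA⟩ y ⟨hyV, hyA⟩
  have hinter : γ '' Icc a b ∩ (sphere (γ b) R ∪ γ '' Icc a c) = γ '' Icc a c := by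
    refine Subset.antisymm ?_ fun z hz =>
      ⟨image_mono (Icc_subset_Icc_right hcb.le) hz, Or.inr hz⟩
    rintro _ ⟨⟨u, hu, rfl⟩, hsphere | hc⟩
    · have huc : u ≤ c := le_of_not_gt fun hcu => (hcR u hu hcu).ne hsphere
      exact mem_image_of_mem γ ⟨hu.1, huc⟩
    · exact hc
  have hdisj : Disjoint (segment ℝ x y) (sphere (γ b) R ∪ γ '' Icc a c) := by
    refine disjoint_left.2 fun z hz => ?_
    have hzV := (convex_ball _ _).segment_subset hxV hyV hz
    refine not_or_intro ?_ (hrc (ball_subset_ball (min_le_left r R) hzV))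
    exact (hzV.trans_le (min_le_right r R)).ne
  have hpre : IsPreconnected (γ '' Icc a b ∩ (sphere (γ b) R ∪ γ '' Icc a c)) := by
    rw [hinter]
    exact isPreconnected_Icc.image _ (hγ.mono (Icc_subset_Icc_right hcb.le))
  have hy := mem_connectedComponentIn_compl_arc_union hγ hinj
    ((isCompact_sphere _ R).union hcompact) hpre hxA hyA hdisj
  set C := connectedComponentIn (γ '' Icc a b ∪ (sphere (γ b) R ∪ γ '' Icc a c))ᶜ x
  have hCsub : C ⊆ (γ '' Icc a b ∪ (sphere (γ b) R ∪ γ '' Icc a c))ᶜ :=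
    connectedComponentIn_subset _ _
  have hCx : x ∈ C := mem_connectedComponentIn (connectedComponentIn_nonempty_iff.1 ⟨y, hy⟩)
  have hCball : C ⊆ ball (γ b) R :=
    subset_ball_of_disjoint_sphere isPreconnected_connectedComponentIn
      ⟨x, hCx, hxV.trans_le (min_le_right r R)⟩
      (disjoint_left.2 fun z hz hzR => hCsub hz (Or.inr (Or.inl hzR)))
  refine isPreconnected_connectedComponentIn.subset_connectedComponentIn hCx ?_ hy
  exact fun z hz => ⟨hRG (hCball hz), fun hzA => hCsub hz (Or.inl hzA)⟩

section Propagation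

variable {γ : ℝ → ℂ} {a b : ℝ} {U : Set ℂ} {x₀ : ℂ}

lemma exists_Ioc_mem_closure_connectedComponentIn (hγ : ContinuousOn γ (Icc a b))
    (hinj : InjOn γ (Icc a b)) (hU : IsOpen U) {d v : ℝ} (had : a ≤ d) (hdv : d < v) (hvb : v ≤ b)
    (hdU : γ d ∈ U) (hd : γ d ∈ closure (connectedComponentIn (U \ γ '' Icc a b) x₀)) :
    ∃ w ∈ Ioc d v, γ w ∈ closure (connectedComponentIn (U \ γ '' Icc a b) x₀) := by
  have hdb : d ≤ b := hdv.le.trans hvb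
  have hO : IsOpen (U \ γ '' Icc a b) :=
    hU.sdiff (isCompact_Icc.image_of_continuousOn hγ).isClosed
  set W := connectedComponentIn (U \ γ '' Icc a b) x₀
  have hWO : W ⊆ U \ γ '' Icc a b := connectedComponentIn_subset _ _
  by_contra! hnone
  have hG : U \ γ '' Icc v b ∈ 𝓝 (γ d) := by
    refine (hU.sdiff (isCompact_image_Icc hγ (had.trans hdv.le) le_rfl).isClosed).mem_nhds ⟨hdU, ?_⟩
    rw [hinj.mem_image_iff (Icc_subset_Icc_left (had.trans hdv.le)) ⟨had, hdb⟩]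
    exact fun h => h.1.not_gt hdv
  obtain ⟨V, hV, hVcomp⟩ := exists_nhds_endpoint_subset_connectedComponentIn had
    (hγ.mono (Icc_subset_Icc_right hdb)) (hinj.mono (Icc_subset_Icc_right hdb)) hG
  obtain ⟨x, hxV, hxW⟩ := mem_closure_iff_nhds.1 hd V hV
  have hxA : x ∉ γ '' Icc a d := fun h => (hWO hxW).2 (image_mono (Icc_subset_Icc_right hdb) h)
  obtain ⟨w, hw, hwV⟩ : ∃ w ∈ Ioc d v, γ w ∈ V := by
    have hcont : Tendsto γ (𝓝[>] d) (𝓝 (γ d)) := (hγ d ⟨had, hdb⟩).mono_of_mem_nhdsWithin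
      (mem_of_superset (Icc_mem_nhdsGT (hdv.trans_le hvb)) (Icc_subset_Icc_left had))
    exact ((eventually_mem_set.2 (Ioc_mem_nhdsGT hdv)).and (hcont hV)).exists
  have hwI : w ∈ Icc a b := ⟨had.trans hw.1.le, hw.2.trans hvb⟩
  have hwA : γ w ∉ γ '' Icc a d := by
    rw [hinj.mem_image_iff (Icc_subset_Icc_right hdb) hwI]
    exact fun h => h.2.not_gt hw.1
  set C := connectedComponentIn ((U \ γ '' Icc v b) \ γ '' Icc a d) x
  have hwC : γ w ∈ C := hVcomp x ⟨hxV, hxA⟩ ⟨hwV, hwA⟩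
  have hxC : x ∈ C := mem_connectedComponentIn (connectedComponentIn_nonempty_iff.1 ⟨_, hwC⟩)
  have hCW : C ⊆ W := by
    refine subset_connectedComponentIn_of_inter_closure_subset hO
      isPreconnected_connectedComponentIn ⟨x, hxC, hxW⟩ ?_
    rintro z ⟨hzC, hzW⟩
    obtain ⟨⟨hzU, hzv⟩, hzd⟩ := connectedComponentIn_subset _ _ hzC
    refine ⟨hzU, ?_⟩
    rintro ⟨q, hq, rfl⟩
    have hdq : d < q := lt_of_not_ge fun h => hzd (mem_image_of_mem γ ⟨hq.1, h⟩)
    have hqv : q < v := lt_of_not_ge fun h => hzv (mem_image_of_mem γ ⟨h, hq.2⟩)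
    exact hnone q ⟨hdq, hqv.le⟩ hzW
  exact (hWO (hCW hwC)).2 (mem_image_of_mem γ hwI)

lemma mem_closure_connectedComponentIn_of_le (hγ : ContinuousOn γ (Icc a b))
    (hinj : InjOn γ (Icc a b)) (hU : IsOpen U) {u v : ℝ} (hau : a ≤ u) (huv : u ≤ v) (hvb : v ≤ b)
    (huvU : γ '' Icc u v ⊆ U)
    (hu : γ u ∈ closure (connectedComponentIn (U \ γ '' Icc a b) x₀)) :
    γ v ∈ closure (connectedComponentIn (U \ γ '' Icc a b) x₀) := by
  set W := connectedComponentIn (U \ γ '' Icc a b) x₀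
  have hIcc : Icc u v ⊆ {w | γ w ∈ closure W} := by
    refine IsClosed.Icc_subset_of_forall_exists_gt ?_ hu fun d hd v' hv' => ?_
    · rw [inter_comm]
      exact (hγ.mono (Icc_subset_Icc hau hvb)).preimage_isClosed_of_isClosed isClosed_Icc
        isClosed_closure
    · obtain ⟨w, hw, hwW⟩ := exists_Ioc_mem_closure_connectedComponentIn hγ hinj hU
        (hau.trans hd.2.1) (lt_min hd.2.2 hv') ((min_le_left v v').trans hvb)
        (huvU (mem_image_of_mem γ (Ico_subset_Icc_self hd.2))) hd.1
      exact ⟨w, hwW, hw.1, hw.2.trans (min_le_right v v')⟩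
  exact hIcc (right_mem_Icc.2 huv)

lemma mem_closure_connectedComponentIn_of_uIcc (hγ : ContinuousOn γ (Icc a b))
    (hinj : InjOn γ (Icc a b)) (hU : IsOpen U) {u v : ℝ} (hu : u ∈ Icc a b) (hv : v ∈ Icc a b)
    (huvU : γ '' uIcc u v ⊆ U)
    (huW : γ u ∈ closure (connectedComponentIn (U \ γ '' Icc a b) x₀)) :
    γ v ∈ closure (connectedComponentIn (U \ γ '' Icc a b) x₀) := by
  rcases le_total u v with huv | hvu
  · rw [uIcc_of_le huv] at huvU
    exact mem_closure_connectedComponentIn_of_le hγ hinj hU hu.1 huv hv.2 huvU huW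
  · rw [uIcc_of_ge hvu] at huvU
    have hmaps : MapsTo Neg.neg (Icc (-b) (-a)) (Icc a b) := fun w hw =>
      ⟨le_neg_of_le_neg hw.2, neg_le_of_neg_le hw.1⟩
    have himage : ∀ c d : ℝ, (γ ∘ Neg.neg) '' Icc (-d) (-c) = γ '' Icc c d := fun c d => by
      rw [image_comp, image_neg_Icc, neg_neg, neg_neg]
    have hreverse := mem_closure_connectedComponentIn_of_le (γ := γ ∘ Neg.neg) (x₀ := x₀)
      (hγ.comp continuousOn_neg hmaps) (hinj.comp neg_injective.injOn hmaps) hU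
      (neg_le_neg hu.2) (neg_le_neg hvu) (neg_le_neg hv.1) (by rwa [himage])
    rw [himage, Function.comp_apply, Function.comp_apply, neg_neg, neg_neg] at hreverse
    exact hreverse huW

end Propagation

/-- The set `K` is locally accessible at `p` if, inside any open neighborhood `U` of `p`, the points
off `K` near `p` lie in components of `U \ K` that accumulate at `p`. -/
def IsLocallyAccessible {X : Type*} [TopologicalSpace X] (K : Set X) (p : X) : Prop :=
  ∀ U, IsOpen U → p ∈ U → ∀ᶠ x in 𝓝 p, x ∉ K → p ∈ closure (connectedComponentIn (U \ K) x)

lemma eventually_exists_mem_closure_connectedComponentIn {E : Type*} [NormedAddCommGroup E]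
    [NormedSpace ℝ E] {K : Set E} (hK : IsCompact K) {p : E} (hp : p ∈ K) {U : Set E}
    (hU : U ∈ 𝓝 p) :
    ∀ᶠ x in 𝓝 p, x ∉ K → ∃ q ∈ K ∩ U, q ∈ closure (connectedComponentIn (U \ K) x) := by
  obtain ⟨r, hr, hrU⟩ := Metric.mem_nhds_iff.1 hU
  filter_upwards [ball_mem_nhds p (half_pos hr)] with x hx hxK
  rw [mem_ball] at hx
  obtain ⟨q, hqK, hqmin⟩ := hK.exists_isMinOn ⟨p, hp⟩ (f := dist x) (by fun_prop)
  replace hqmin : ∀ z ∈ K, dist x q ≤ dist x z := fun z hz => hqmin hz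
  have hqp : dist x q ≤ dist x p := hqmin p hp
  have hpos : 0 < dist x q := dist_pos.2 (ne_of_mem_of_not_mem hqK hxK).symm
  have hball : ball x (dist x q) ⊆ U \ K := fun z hz => by
    rw [mem_ball] at hz
    refine ⟨hrU ?_, fun hzK => (dist_comm x z ▸ hqmin z hzK).not_gt hz⟩
    have := dist_triangle z x p
    rw [mem_ball]
    linarith
  refine ⟨q, ⟨hqK, hrU ?_⟩,
    closure_mono ((convex_ball x _).isPreconnected.subset_connectedComponentIn
      (mem_ball_self hpos) hball) ?_⟩
  · have := dist_triangle_left q p x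
    rw [mem_ball]
    linarith
  · rw [closure_ball x hpos.ne', mem_closedBall, dist_comm]

lemma exists_nhds_image_uIcc_subset {X : Type*} [TopologicalSpace X] [T2Space X] {γ : ℝ → X}
    {a b c : ℝ} (hγ : ContinuousOn γ (Icc a b)) (hinj : InjOn γ (Icc a b)) (hc : c ∈ Icc a b)
    {U : Set X} (hU : U ∈ 𝓝 (γ c)) :
    ∃ N ∈ 𝓝 (γ c), ∀ u ∈ Icc a b, γ u ∈ N → γ '' uIcc u c ⊆ U := by
  obtain ⟨η, hη, hηU⟩ := Metric.mem_nhdsWithin_iff.1 (hγ c hc hU)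
  have hinv : ContinuousWithinAt (Function.invFunOn γ (Icc a b)) (γ '' Icc a b) (γ c) :=
    continuousOn_invFunOn isCompact_Icc hγ hinj _ (mem_image_of_mem γ hc)
  have hball : ball c η ∈ 𝓝 (Function.invFunOn γ (Icc a b) (γ c)) := by
    rw [hinj.leftInvOn_invFunOn hc]
    exact ball_mem_nhds c hη
  obtain ⟨N, hN, hNη⟩ := mem_nhdsWithin_iff_exists_mem_nhds_inter.1 (hinv hball)
  refine ⟨N, hN, fun u hu huN => image_subset_iff.2 fun w hw => hηU ⟨?_, ?_⟩⟩
  · have huη : u ∈ ball c η := by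
      simpa only [mem_preimage, hinj.leftInvOn_invFunOn hu] using
        hNη ⟨huN, mem_image_of_mem γ hu⟩
    exact (convex_ball c η).ordConnected.uIcc_subset huη (mem_ball_self hη) hw
  · exact ordConnected_Icc.uIcc_subset hu hc hw

theorem isLocallyAccessible_image_Icc {γ : ℝ → ℂ} {a b c : ℝ} (hγ : ContinuousOn γ (Icc a b))
    (hinj : InjOn γ (Icc a b)) (hc : c ∈ Icc a b) : IsLocallyAccessible (γ '' Icc a b) (γ c) := by
  intro U hU hcU
  obtain ⟨N, hN, hNU⟩ := exists_nhds_image_uIcc_subset hγ hinj hc (hU.mem_nhds hcU)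
  filter_upwards [eventually_exists_mem_closure_connectedComponentIn
    (isCompact_Icc.image_of_continuousOn hγ) (mem_image_of_mem γ hc)
    (inter_mem hN (hU.mem_nhds hcU))] with x hx hxA
  obtain ⟨_, ⟨⟨u, hu, rfl⟩, huN, -⟩, hux⟩ := hx hxA
  exact mem_closure_connectedComponentIn_of_uIcc hγ hinj hU hu hc (hNU u hu huN)
    (closure_mono (connectedComponentIn_mono x (sdiff_subset_sdiff_left inter_subset_right)) hux)

lemma exists_mem_sphere_map_add_eq_map_sub {E : Type*} [NormedAddCommGroup E] [NormedSpace ℝ E]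
    (hE : 1 < Module.rank ℝ E) {f : E → ℝ} {x : E} {r : ℝ} (hr : 0 ≤ r)
    (hf : ContinuousOn f (sphere x r)) : ∃ y ∈ sphere (0 : E) r, f (x + y) = f (x - y) := by
  have hadd : ContinuousOn (fun y => f (x + y)) (sphere 0 r) :=
    hf.comp (by fun_prop) fun y hy => by simpa using hy
  have hsub : ContinuousOn (fun y => f (x - y)) (sphere 0 r) :=
    hf.comp (by fun_prop) fun y hy => by simpa [dist_eq_norm] using hy
  have hpre : IsPreconnected (sphere (0 : E) r) := isPreconnected_sphere hE 0 r
  obtain ⟨y, hy⟩ : (sphere (0 : E) r).Nonempty := (isConnected_sphere hE 0 hr).nonempty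
  have hy' : -y ∈ sphere (0 : E) r := by simpa using hy
  rcases le_total (f (x + y)) (f (x - y)) with h | h
  · exact hpre.intermediate_value₂ hy hy' hadd hsub h (by simpa [← sub_eq_add_neg] using h)
  · exact hpre.intermediate_value₂ hy' hy hadd hsub (by simpa [← sub_eq_add_neg] using h) h

theorem interior_image_Icc_eq_empty {E : Type*} [NormedAddCommGroup E] [NormedSpace ℝ E]
    (hE : 1 < Module.rank ℝ E) {γ : ℝ → E} {a b : ℝ} (hγ : ContinuousOn γ (Icc a b))
    (hinj : InjOn γ (Icc a b)) : interior (γ '' Icc a b) = ∅ := by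
  refine eq_empty_of_forall_notMem fun x hx => ?_
  obtain ⟨r, hr, hball⟩ := nhds_basis_closedBall.mem_iff.1 (mem_interior_iff_mem_nhds.1 hx)
  have hsphere : sphere x r ⊆ γ '' Icc a b := sphere_subset_closedBall.trans hball
  obtain ⟨y, hy, hxy⟩ := exists_mem_sphere_map_add_eq_map_sub hE hr.le
    ((continuousOn_invFunOn isCompact_Icc hγ hinj).mono hsphere)
  have hadd : x + y ∈ γ '' Icc a b := hsphere (by simpa using hy)
  have hsub : x - y ∈ γ '' Icc a b := hsphere (by simpa [dist_eq_norm] using hy)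
  have hyy : x + y = x - y := Function.invFunOn_injOn_image γ (Icc a b) hadd hsub hxy
  refine ne_neg_of_mem_sphere ℝ hr.ne' ⟨y, hy⟩ (Subtype.ext (add_left_cancel (a := x) ?_))
  simpa [← sub_eq_add_neg] using hyy

/-- A chain of sets, meant for `ι = ℕ` or `ι = ℤ`: consecutive members meet, and members that are
not consecutive are disjoint. -/
structure IsChordlessChain {ι X : Type*} [LT ι] [Add ι] [One ι] (C : ι → Set X) : Prop where
  not_disjoint_succ : ∀ i, ¬Disjoint (C i) (C (i + 1))
  disjoint : ∀ ⦃i j⦄, i + 1 < j → Disjoint (C i) (C j)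

/-- A cell of `O` is an open convex set whose closure lies in `O`. -/
structure IsCell {E : Type*} [AddCommGroup E] [Module ℝ E] [TopologicalSpace E] (O B : Set E) :
    Prop where
  isOpen : IsOpen B
  convex : Convex ℝ B
  closure_subset : closure B ⊆ O

lemma eventually_disjoint_of_notMem_closure {ι X : Type*} [TopologicalSpace X] {l : Filter ι}
    {B : ι → Set X} {p : X} (hB : Tendsto B l (𝓝 p).smallSets) {S : Set X} (hp : p ∉ closure S) :
    ∀ᶠ j in l, Disjoint S (B j) := by
  filter_upwards [tendsto_smallSets_iff.1 hB _ (isClosed_closure.compl_mem_nhds hp)] with j hj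
  exact disjoint_compl_right.mono subset_closure hj

lemma exists_isGreatest_of_eventually_notMem {I : Type*} [LinearOrder I] {s : Set I}
    (hne : s.Nonempty) (hs : ∀ᶠ i in cofinite, i ∉ s) : ∃ i, IsGreatest s i := by
  have hfin : s.Finite := (eventually_cofinite.1 hs).subset fun i hi => not_not.2 hi
  obtain ⟨i, hi, hmax⟩ := exists_max_image s id hfin hne
  exact ⟨i, hi, fun j hj => hmax j hj⟩

lemma exists_strictMono_isChordlessChain {I X : Type*} [LinearOrder I] {B : I → Set X}
    (hfin : ∀ i, ∀ᶠ j in cofinite, Disjoint (B i) (B j))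
    (hnext : ∀ i, ∃ j, i < j ∧ ¬Disjoint (B i) (B j)) (i₀ : I) :
    ∃ n : ℕ → I, n 0 = i₀ ∧ StrictMono n ∧ IsChordlessChain (B ∘ n) := by
  have hlast : ∀ i, ∃ j, IsGreatest {j | ¬Disjoint (B i) (B j)} j := fun i =>
    exists_isGreatest_of_eventually_notMem ((hnext i).imp fun _ h => h.2) <| by
      simpa only [mem_ofPred_eq, not_not] using hfin i
  choose last hmeet hmax using hlast
  have hlt : ∀ i, i < last i := fun i =>
    let ⟨_, hij, hj⟩ := hnext i
    hij.trans_le (hmax i hj)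
  have hsucc : ∀ k, last^[k + 1] i₀ = last (last^[k] i₀) := fun k =>
    Function.iterate_succ_apply' last k i₀
  have hmono : StrictMono fun k => last^[k] i₀ := strictMono_nat_of_lt_succ fun k => by
    rw [hsucc]
    exact hlt _
  refine ⟨fun k => last^[k] i₀, rfl, hmono, fun k => ?_, fun k j hkj => ?_⟩
  · simp only [Function.comp_apply, hsucc]
    exact hmeet _
  · by_contra hne
    exact ((hsucc k).symm.trans_lt (hmono hkj)).not_ge (hmax _ hne)

lemma exists_seq_joinedIn {X : Type*} [TopologicalSpace X] [LocallyPathConnectedSpace X] {K : Set X}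
    (hK : IsClosed K) {p : X} (hp : IsLocallyAccessible K p) {V : ℕ → Set X}
    (hV : ∀ n, IsOpen (V n)) (hpV : ∀ n, p ∈ V n) {w : X}
    (hw : p ∈ closure (connectedComponentIn (V 0 \ K) w)) :
    ∃ x : ℕ → X, x 0 = w ∧ ∀ n, JoinedIn (V n \ K) (x n) (x (n + 1)) := by
  have hstep : ∀ n x, p ∈ closure (connectedComponentIn (V n \ K) x) → ∃ y,
      p ∈ closure (connectedComponentIn (V (n + 1) \ K) y) ∧ JoinedIn (V n \ K) x y := by
    intro n x hx
    obtain ⟨y, hy, hyx⟩ := mem_closure_iff_nhds.1 hx _ (hp _ (hV (n + 1)) (hpV (n + 1)))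
    have hxV : x ∈ V n \ K := connectedComponentIn_nonempty_iff.1 ⟨y, hyx⟩
    have hpath : IsPathConnected (connectedComponentIn (V n \ K) x) :=
      ((hV n).sdiff hK).connectedComponentIn.isConnected_iff_isPathConnected.1
        (isConnected_connectedComponentIn_iff.2 hxV)
    exact ⟨y, hy (connectedComponentIn_subset _ _ hyx).2,
      (hpath.joinedIn x (mem_connectedComponentIn hxV) y hyx).mono
        (connectedComponentIn_subset _ _)⟩
  choose! next hnext hjoined using hstep
  let x : ℕ → X := fun n => Nat.rec w next n
  have hx : ∀ n, p ∈ closure (connectedComponentIn (V n \ K) (x n)) := fun n => by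
    induction n with
    | zero => exact hw
    | succ n ih => exact hnext n _ ih
  exact ⟨x, rfl, fun n => hjoined n _ (hx n)⟩

lemma exists_isCell_chain_of_joinedIn {E : Type*} [NormedAddCommGroup E] [NormedSpace ℝ E]
    {V : Set E} (hV : IsOpen V) {x y : E} (h : JoinedIn V x y) :
    ∃ (M : ℕ) (B : ℕ → Set E), x ∈ B 0 ∧ y ∈ B M ∧ (∀ k, IsCell V (B k)) ∧
      ∀ k, ¬Disjoint (B k) (B (k + 1)) := by
  obtain ⟨c, hcV⟩ := h
  have hball : ∀ s, ∃ r > 0, closedBall (c s) r ⊆ V := fun s =>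
    nhds_basis_closedBall.mem_iff.1 (hV.mem_nhds (hcV s))
  choose r hr hrV using hball
  obtain ⟨t, ht0, hmono, ⟨M, hM⟩, hsub⟩ := exists_monotone_Icc_subset_open_cover_unitInterval
    (c := fun s => c ⁻¹' ball (c s) (r s)) (fun s => isOpen_ball.preimage c.continuous)
    fun s _ => mem_iUnion_of_mem s (mem_ball_self (hr s))
  choose s hs using hsub
  have hleft : ∀ k, c (t k) ∈ ball (c (s k)) (r (s k)) := fun k =>
    hs k (left_mem_Icc.2 (hmono k.le_succ))
  have hright : ∀ k, c (t (k + 1)) ∈ ball (c (s k)) (r (s k)) := fun k =>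
    hs k (right_mem_Icc.2 (hmono k.le_succ))
  refine ⟨M, fun k => ball (c (s k)) (r (s k)), ?_, ?_, fun k => ⟨isOpen_ball, convex_ball _ _,
    closure_ball_subset_closedBall.trans (hrV _)⟩, fun k =>
    not_disjoint_iff.2 ⟨c (t (k + 1)), hright k, hleft (k + 1)⟩⟩
  · simpa only [ht0, c.source] using hleft 0
  · simpa only [hM M le_rfl, c.target] using hleft M

lemma tendsto_sigmaLex_fst_cofinite {ι : Type*} {α : ι → Type*} [∀ i, Finite (α i)] :
    Tendsto (fun i : Σₗ i, α i => (ofLex i).1) cofinite cofinite :=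
  Tendsto.cofinite_of_finite_preimage_singleton fun i =>
    ((finite_range fun a : α i => toLex (⟨i, a⟩ : Σ i, α i)).subset <| by
      rintro ⟨_, a⟩ rfl
      exact mem_range_self a)

theorem exists_isChordlessChain_tendsto {E : Type*} [NormedAddCommGroup E] [NormedSpace ℝ E]
    {O : Set E} {V : ℕ → Set E} (hV : ∀ n, IsOpen (V n)) (hVO : ∀ n, V n ⊆ O) {p : E}
    (hVp : Tendsto V atTop (𝓝 p).smallSets) (hp : p ∉ O) {x : ℕ → E}
    (hx : ∀ n, JoinedIn (V n) (x n) (x (n + 1))) :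
    ∃ R : ℕ → Set E, x 0 ∈ R 0 ∧ (∀ n, IsCell O (R n)) ∧ IsChordlessChain R ∧
      Tendsto R atTop (𝓝 p).smallSets := by
  choose M B hfirst hlast hcell hmeet using fun n => exists_isCell_chain_of_joinedIn (hV n) (hx n)
  let I := Σₗ n, Fin (M n + 1)
  let D : I → Set E := fun i => B (ofLex i).1 (ofLex i).2
  have hDO : ∀ i, closure (D i) ⊆ O := fun i => (hcell _ _).closure_subset.trans (hVO _)
  have hDp : Tendsto D cofinite (𝓝 p).smallSets := by
    refine tendsto_smallSets_iff.2 fun W hW => ?_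
    have hVW := tendsto_smallSets_iff.1 hVp W hW
    rw [← Nat.cofinite_eq_atTop] at hVW
    filter_upwards [tendsto_sigmaLex_fst_cofinite.eventually hVW] with i hi
    exact (subset_closure.trans (hcell _ _).closure_subset).trans hi
  have hnext : ∀ i, ∃ j, i < j ∧ ¬Disjoint (D i) (D j) := by
    intro i
    obtain ⟨⟨n, k⟩, rfl⟩ := toLex.surjective i
    rcases k.is_le.lt_or_eq with hk | hk
    · exact ⟨toLex ⟨n, ⟨k + 1, by omega⟩⟩, Sigma.Lex.right _ _ (Nat.lt_succ_self k), hmeet n k⟩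
    · refine ⟨toLex ⟨n + 1, 0⟩, Sigma.Lex.left _ _ n.lt_succ_self, ?_⟩
      refine not_disjoint_iff.2 ⟨x (n + 1), ?_, hfirst (n + 1)⟩
      simpa only [D, ofLex_toLex, hk] using hlast n
  obtain ⟨n, hn0, hmono, hchain⟩ := exists_strictMono_isChordlessChain
    (fun i => eventually_disjoint_of_notMem_closure hDp fun hpD => hp (hDO i hpD)) hnext
    (toLex ⟨0, 0⟩)
  refine ⟨D ∘ n, ?_, fun k => ⟨(hcell _ _).isOpen, (hcell _ _).convex, hDO _⟩, hchain, ?_⟩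
  · rw [Function.comp_apply, hn0]
    exact hfirst 0
  · rw [← Nat.cofinite_eq_atTop]
    exact hDp.comp hmono.injective.tendsto_cofinite

lemma IsLocallyAccessible.exists_isChordlessChain {E : Type*} [NormedAddCommGroup E]
    [NormedSpace ℝ E] {K : Set E} (hK : IsClosed K) {p : E} (hp : IsLocallyAccessible K p)
    (hpK : p ∈ K) {U : Set E} (hU : IsOpen U) (hpU : p ∈ U) {w : E}
    (hw : p ∈ closure (connectedComponentIn (U \ K) w)) :
    ∃ R : ℕ → Set E, w ∈ R 0 ∧ (∀ n, IsCell (U \ K) (R n)) ∧ IsChordlessChain R ∧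
      Tendsto R atTop (𝓝 p).smallSets := by
  let V : ℕ → Set E := fun n => U ∩ {z | n * dist z p < 1}
  have hV : ∀ n, IsOpen (V n) := fun n => hU.inter (isOpen_lt (by fun_prop) continuous_const)
  have hVp : Tendsto V atTop (𝓝 p).smallSets := by
    refine tendsto_smallSets_iff.2 fun W hW => ?_
    obtain ⟨r, hr, hrW⟩ := Metric.mem_nhds_iff.1 hW
    filter_upwards [(tendsto_natCast_atTop_atTop.atTop_mul_const hr).eventually_ge_atTop 1]
      with n hn z hz
    have hlt : n * dist z p < n * r := lt_of_lt_of_le hz.2 hn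
    exact hrW (mem_ball.2 (lt_of_mul_lt_mul_left hlt n.cast_nonneg))
  obtain ⟨x, rfl, hx⟩ := exists_seq_joinedIn hK hp hV (fun n => ⟨hpU, by simp⟩)
    (w := w) (by simpa [V] using hw)
  exact exists_isChordlessChain_tendsto (fun n => (hV n).sdiff hK)
    (fun n => sdiff_subset_sdiff_left inter_subset_left)
    (tendsto_smallSets_iff.2 fun W hW => (tendsto_smallSets_iff.1 hVp W hW).mono fun n hn =>
      sdiff_subset.trans hn) (fun hpO => hpO.2 hpK) hx

lemma eventually_forall_disjoint_of_ne {ι X : Type*} [TopologicalSpace X] [T2Space X] {l : Filter ι}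
    {R : ι → Set X} {R' : ℕ → Set X} {p q : X} (hR : Tendsto R l (𝓝 p).smallSets)
    (hR' : Tendsto R' atTop (𝓝 q).smallSets) (hpq : p ≠ q) (hp : ∀ k, p ∉ closure (R' k)) :
    ∀ᶠ j in l, ∀ k, Disjoint (R' k) (R j) := by
  obtain ⟨P, Q, hP, hQ, hpP, hqQ, hPQ⟩ := t2_separation hpq
  obtain ⟨N, hN⟩ := eventually_atTop.1 (tendsto_smallSets_iff.1 hR' Q (hQ.mem_nhds hqQ))
  have hfinite : ∀ᶠ j in l, ∀ k ∈ Iio N, Disjoint (R' k) (R j) :=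
    (eventually_all_finite (finite_Iio N)).2 fun k _ =>
      eventually_disjoint_of_notMem_closure hR (hp k)
  filter_upwards [hfinite, tendsto_smallSets_iff.1 hR P (hP.mem_nhds hpP)] with j hj hjP k
  rcases lt_or_ge k N with hk | hk
  · exact hj k hk
  · exact hPQ.symm.mono (hN k hk) hjP

/-- The two-sided sequence `…, L 1, L 0, R 0, R 1, …`, in which `R 0` has index `0`. -/
def bilateral {α : Type*} (L R : ℕ → α) : ℤ → α
  | Int.ofNat i => R i
  | Int.negSucc j => L j

lemma tendsto_bilateral_atTop {α : Type*} (L : ℕ → α) {R : ℕ → α} {l : Filter α}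
    (hR : Tendsto R atTop l) : Tendsto (bilateral L R) atTop l := by
  rw [← Nat.map_cast_int_atTop, tendsto_map'_iff]
  exact hR

lemma tendsto_bilateral_atBot {α : Type*} {L : ℕ → α} (R : ℕ → α) {l : Filter α}
    (hL : Tendsto L atTop l) : Tendsto (bilateral L R) atBot l := by
  rw [← map_neg_atTop, ← Nat.map_cast_int_atTop, tendsto_map'_iff, tendsto_map'_iff,
    ← tendsto_add_atTop_iff_nat 1]
  exact hL

lemma forall_bilateral {α : Type*} {L R : ℕ → α} {P : α → Prop} (hL : ∀ n, P (L n))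
    (hR : ∀ n, P (R n)) (i : ℤ) : P (bilateral L R i) := by
  rcases i with i | j
  exacts [hR i, hL j]

namespace IsChordlessChain
variable {X : Type*} {L R : ℕ → Set X}

lemma shift (hR : IsChordlessChain R) (m : ℕ) : IsChordlessChain fun n => R (m + n) where
  not_disjoint_succ n := hR.not_disjoint_succ (m + n)
  disjoint i j hij := hR.disjoint (by omega)

lemma bilateral (hL : IsChordlessChain L) (hR : IsChordlessChain R)
    (hLR : ¬Disjoint (L 0) (R 0)) (hcross : ∀ j i, 0 < j + i → Disjoint (L j) (R i)) :
    IsChordlessChain (bilateral L R) where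
  not_disjoint_succ
    | Int.ofNat i => hR.not_disjoint_succ i
    | Int.negSucc 0 => hLR
    | Int.negSucc (j + 1) => fun h => hL.not_disjoint_succ j h.symm
  disjoint
    | Int.ofNat i, Int.ofNat j, hij => hR.disjoint (by simp at hij; omega)
    | Int.ofNat i, Int.negSucc j, hij => by simp at hij; omega
    | Int.negSucc i, Int.ofNat j, hij => hcross i j (by simp at hij; omega)
    | Int.negSucc i, Int.negSucc j, hij => (hL.disjoint (by omega)).symm

/-- `L` is left for the last time at an index `m` where it meets `R`, and `R` is entered at the last
index `k` where it meets `L m`. -/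
theorem exists_bilateral [TopologicalSpace X] [T2Space X] (hL : IsChordlessChain L)
    (hR : IsChordlessChain R) {p q : X} (hLp : Tendsto L atTop (𝓝 p).smallSets)
    (hRq : Tendsto R atTop (𝓝 q).smallSets) (hpq : p ≠ q) (hp : ∀ n, p ∉ closure (R n))
    (hq : ∀ n, q ∉ closure (L n)) (hLR : ¬Disjoint (L 0) (R 0)) :
    ∃ m k, IsChordlessChain (PlaneArc.bilateral (fun n => L (m + n)) fun n => R (k + n)) := by
  obtain ⟨m, ⟨k₀, hk₀⟩, hm⟩ : ∃ m, IsGreatest {m | ∃ k, ¬Disjoint (R k) (L m)} m := by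
    refine exists_isGreatest_of_eventually_notMem ⟨0, 0, fun h => hLR h.symm⟩ ?_
    rw [Nat.cofinite_eq_atTop]
    filter_upwards [eventually_forall_disjoint_of_ne hLp hRq hpq hp] with m hm
    rintro ⟨k, hk⟩
    exact hk (hm k)
  obtain ⟨k, hk, hkmax⟩ : ∃ k, IsGreatest {k | ¬Disjoint (L m) (R k)} k := by
    refine exists_isGreatest_of_eventually_notMem ⟨k₀, fun h => hk₀ h.symm⟩ ?_
    rw [Nat.cofinite_eq_atTop]
    filter_upwards [eventually_disjoint_of_notMem_closure hRq (hq m)] with k hk hk'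
    exact hk' hk
  refine ⟨m, k, (hL.shift m).bilateral (hR.shift k) hk fun j i hji => ?_⟩
  by_contra hne
  have hj : m + j ≤ m := hm ⟨k + i, fun h => hne h.symm⟩
  obtain rfl : j = 0 := by omega
  have hi : k + i ≤ k := hkmax hne
  omega

end IsChordlessChain

lemma smoothTransition_add_one_sub (x : ℝ) :
    Real.smoothTransition x + Real.smoothTransition (1 - x) = 1 := by
  have hdenom := (Real.smoothTransition.pos_denom x).ne'
  simp only [Real.smoothTransition, sub_sub_cancel, add_comm (expNegInvGlue (1 - x))]
  rw [← add_div, div_self hdenom]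

/-- The smooth step from `0` to `1` on `[-δ, δ]`, with the symmetry
`smoothStep δ s + smoothStep δ (-s) = 1`. -/
def smoothStep (δ s : ℝ) : ℝ := Real.smoothTransition ((s / δ + 1) / 2)

/-- The primitive of `smoothStep δ`: a smooth version of `max s 0` that differs from it only on
`(-δ, δ)`. -/
def smoothRamp (δ s : ℝ) : ℝ := ∫ u in -δ..s, smoothStep δ u

section Ramp

variable {δ s : ℝ}

lemma smoothStep_contDiff (δ : ℝ) : ContDiff ℝ (⊤ : ℕ∞) (smoothStep δ) :=
  Real.smoothTransition.contDiff.comp (by fun_prop)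

lemma smoothStep_nonneg (δ s : ℝ) : 0 ≤ smoothStep δ s := Real.smoothTransition.nonneg _

lemma smoothStep_add_neg (δ s : ℝ) : smoothStep δ s + smoothStep δ (-s) = 1 := by
  rw [smoothStep, smoothStep, show (-s / δ + 1) / 2 = 1 - (s / δ + 1) / 2 by ring,
    smoothTransition_add_one_sub]

lemma smoothRamp_hasDerivAt (δ s : ℝ) : HasDerivAt (smoothRamp δ) (smoothStep δ s) s :=
  ((smoothStep_contDiff δ).continuous.integral_hasStrictDerivAt _ _).hasDerivAt

lemma smoothRamp_contDiff (δ : ℝ) : ContDiff ℝ (⊤ : ℕ∞) (smoothRamp δ) := by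
  rw [contDiff_infty_iff_deriv, funext fun s => (smoothRamp_hasDerivAt δ s).deriv]
  exact ⟨fun s => (smoothRamp_hasDerivAt δ s).differentiableAt, smoothStep_contDiff δ⟩

lemma smoothRamp_monotone (δ : ℝ) : Monotone (smoothRamp δ) :=
  monotone_of_deriv_nonneg (fun s => (smoothRamp_hasDerivAt δ s).differentiableAt) fun s =>
    (smoothRamp_hasDerivAt δ s).deriv ▸ smoothStep_nonneg δ s

lemma smoothRamp_sub_neg (δ s : ℝ) : smoothRamp δ s - smoothRamp δ (-s) = s := by
  have hderiv : ∀ u, HasDerivAt (fun u => smoothRamp δ u - smoothRamp δ (-u) - u) 0 u := by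
    intro u
    have h := ((smoothRamp_hasDerivAt δ u).sub
      ((smoothRamp_hasDerivAt δ (-u)).comp u (hasDerivAt_neg u))).sub (hasDerivAt_id u)
    exact h.congr_deriv (by linarith [smoothStep_add_neg δ u])
  have hconst := is_const_of_deriv_eq_zero (fun u => (hderiv u).differentiableAt)
    (fun u => (hderiv u).deriv) s 0
  simpa [sub_eq_zero] using hconst

lemma smoothRamp_of_le (hδ : 0 < δ) (hs : s ≤ -δ) : smoothRamp δ s = 0 := by
  have hzero : EqOn (smoothStep δ) 0 (uIcc (-δ) s) := fun u hu => by
    rw [uIcc_of_ge hs] at hu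
    have hu' : u / δ ≤ -1 := (div_le_iff₀ hδ).2 (by linarith [hu.2])
    exact Real.smoothTransition.zero_of_nonpos (by linarith)
  rw [smoothRamp, intervalIntegral.integral_congr hzero]
  simp

lemma smoothRamp_of_ge (hδ : 0 < δ) (hs : δ ≤ s) : smoothRamp δ s = s := by
  have h := smoothRamp_sub_neg δ s
  rwa [smoothRamp_of_le hδ (neg_le_neg hs), sub_zero] at h

lemma smoothRamp_mem_Icc (hδ : 0 < δ) (hs : |s| ≤ δ) : smoothRamp δ s ∈ Icc 0 δ := by
  rw [abs_le] at hs
  constructor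
  · exact smoothRamp_of_le hδ le_rfl ▸ smoothRamp_monotone δ hs.1
  · exact (smoothRamp_monotone δ hs.2).trans_eq (smoothRamp_of_ge hδ le_rfl)

end Ramp

/-- The polygonal line through `x`, `y`, `z` at the times `-1`, `0`, `1`, with its corner at `y`
smoothed out during the time interval `(-δ, δ)`. -/
def smoothCorner {E : Type*} [AddCommGroup E] [Module ℝ E] (δ : ℝ) (x y z : E) (s : ℝ) : E :=
  y - smoothRamp δ (-s) • (y - x) + smoothRamp δ s • (z - y)

section Corner

variable {E : Type*} [NormedAddCommGroup E] [NormedSpace ℝ E] {δ s : ℝ}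

lemma smoothCorner_of_le (hδ : 0 < δ) (hs : s ≤ -δ) (x y z : E) :
    smoothCorner δ x y z s = AffineMap.lineMap x y (s + 1) := by
  rw [smoothCorner, smoothRamp_of_le hδ hs, smoothRamp_of_ge hδ (le_neg_of_le_neg hs),
    AffineMap.lineMap_apply_module']
  module

lemma smoothCorner_of_ge (hδ : 0 < δ) (hs : δ ≤ s) (x y z : E) :
    smoothCorner δ x y z s = AffineMap.lineMap y z s := by
  rw [smoothCorner, smoothRamp_of_le hδ (neg_le_neg hs), smoothRamp_of_ge hδ hs,
    AffineMap.lineMap_apply_module']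
  module

lemma smoothCorner_contDiff (δ : ℝ) (x y z : E) : ContDiff ℝ (⊤ : ℕ∞) (smoothCorner δ x y z) := by
  have hneg : ContDiff ℝ (⊤ : ℕ∞) fun s => smoothRamp δ (-s) :=
    (smoothRamp_contDiff δ).comp contDiff_neg
  exact (contDiff_const.sub (hneg.smul contDiff_const)).add
    ((smoothRamp_contDiff δ).smul contDiff_const)

lemma exists_mem_segment_smoothCorner_hasDerivAt (δ : ℝ) (x y z : E) (s : ℝ) :
    ∃ v ∈ segment ℝ (y - x) (z - y), HasDerivAt (smoothCorner δ x y z) v s := by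
  refine ⟨smoothStep δ (-s) • (y - x) + smoothStep δ s • (z - y),
    ⟨_, _, smoothStep_nonneg δ (-s), smoothStep_nonneg δ s, ?_, rfl⟩, ?_⟩
  · rw [add_comm, smoothStep_add_neg]
  · have hneg := (smoothRamp_hasDerivAt δ (-s)).comp s (hasDerivAt_neg s)
    have h := ((hneg.smul_const (y - x)).const_sub y).add
      ((smoothRamp_hasDerivAt δ s).smul_const (z - y))
    exact h.congr_deriv (by module)

lemma exists_forall_smoothCorner_mem (x : E) {y : E} (z : E) {U : Set E} (hU : U ∈ 𝓝 y) :
    ∃ δ ∈ Ioc (0 : ℝ) (1 / 4), ∀ s, |s| ≤ δ → smoothCorner δ x y z s ∈ U := by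
  have hcont : Tendsto (fun u : ℝ × ℝ => y - u.1 • (y - x) + u.2 • (z - y)) (𝓝 (0, 0)) (𝓝 y) :=
    Continuous.tendsto' (by fun_prop) _ _ (by simp)
  obtain ⟨r, hr, hrU⟩ := nhds_basis_closedBall.mem_iff.1 (hcont hU)
  set δ := min r (1 / 4)
  have hδ : 0 < δ := lt_min hr (by norm_num)
  have hramp : ∀ s, |s| ≤ δ → smoothRamp δ s ∈ closedBall 0 r := fun s hs => by
    have h := smoothRamp_mem_Icc hδ hs
    rw [mem_closedBall_zero_iff, Real.norm_of_nonneg h.1]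
    exact h.2.trans (min_le_left _ _)
  refine ⟨δ, ⟨hδ, min_le_right _ _⟩, fun s hs => ?_⟩
  have hmem : (smoothRamp δ (-s), smoothRamp δ s) ∈ closedBall (0, 0) r := by
    rw [← closedBall_prod_same]
    exact ⟨hramp (-s) (by rwa [abs_neg]), hramp s hs⟩
  exact hrU hmem

lemma zero_notMem_segment_sub {C D : Set E} (hC : Convex ℝ C) (hD : Convex ℝ D) {x y z : E}
    (hx : x ∈ C \ D) (hy : y ∈ C ∩ D) (hz : z ∈ D \ C) : 0 ∉ segment ℝ (y - x) (z - y) := by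
  intro h
  have hray : SameRay ℝ (x -ᵥ y) (z -ᵥ y) := by simpa using mem_segment_iff_sameRay.1 h
  rcases wbtw_total_of_sameRay_vsub_left hray with h | h
  · exact hx.2 (hD.segment_subset hy.2 hz.1 h.mem_segment)
  · exact hz.2 (hC.segment_subset hy.1 hx.1 h.mem_segment)

lemma smoothCorner_injective (δ : ℝ) {x y z : E} (h : 0 ∉ segment ℝ (y - x) (z - y)) :
    Function.Injective (smoothCorner δ x y z) := by
  have hclosed : IsClosed (segment ℝ (y - x) (z - y)) := by
    rw [segment_eq_image]
    exact (isCompact_Icc.image (by fun_prop)).isClosed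
  obtain ⟨l, u, hu, hl⟩ := geometric_hahn_banach_point_closed (convex_segment _ _) hclosed h
  have hmono : StrictMono (l ∘ smoothCorner δ x y z) := strictMono_of_deriv_pos fun s => by
    obtain ⟨v, hv, hderiv⟩ := exists_mem_segment_smoothCorner_hasDerivAt δ x y z s
    rw [(l.hasFDerivAt.comp_hasDerivAt s hderiv).deriv]
    exact (map_zero l ▸ hu).trans (hl v hv)
  exact hmono.injective.of_comp

end Corner

lemma IsChordlessChain.injective_of_injOn_Icc {α : Type*} {C : ℤ → Set α}
    (hC : IsChordlessChain C) {f : ℝ → α} {ε : ℤ → ℝ} (hε : ∀ i, ε i ∈ Icc 0 1)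
    (hmem : ∀ t, f t ∈ C ⌈t⌉)
    (hnear : ∀ (i : ℤ) (t : ℝ), |t - i| ≤ ε i → f t ∈ C i ∩ C (i + 1))
    (hinj : ∀ i : ℤ, InjOn f (Icc (i - 1 + ε (i - 1)) (i + 1 - ε (i + 1)))) :
    Function.Injective f := by
  have hlower : ∀ t, ∃ i : ℤ, f t ∈ C i ∧ i - 1 + ε (i - 1) ≤ t := by
    intro t
    have hceil := Int.ceil_lt_add_one t
    by_cases h : ⌈t⌉ - 1 + ε (⌈t⌉ - 1) ≤ t
    · exact ⟨⌈t⌉, hmem t, h⟩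
    · refine ⟨⌈t⌉ - 1, (hnear _ t (abs_le.2 ?_)).1, ?_⟩ <;> push_cast
      · constructor <;> linarith [(hε (⌈t⌉ - 1)).2]
      · linarith [(hε (⌈t⌉ - 1 - 1)).2]
  have hupper : ∀ t, ∃ i : ℤ, f t ∈ C i ∧ t ≤ i - ε i := by
    intro t
    have hceil := Int.le_ceil t
    by_cases h : t ≤ ⌈t⌉ - ε ⌈t⌉
    · exact ⟨⌈t⌉, hmem t, h⟩
    · refine ⟨⌈t⌉ + 1, (hnear _ t (abs_le.2 ⟨?_, ?_⟩)).2, ?_⟩ <;> push_cast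
      · linarith
      · linarith
      · linarith [(hε (⌈t⌉ + 1)).2]
  have heq : ∀ t u, t ≤ u → f t = f u → t = u := by
    intro t u htu hftu
    obtain ⟨i, hti, hit⟩ := hlower t
    obtain ⟨j, huj, hju⟩ := hupper u
    have hji : j ≤ i + 1 := not_lt.1 fun h => disjoint_left.1 (hC.disjoint h) hti (hftu ▸ huj)
    have hui : u ≤ i + 1 - ε (i + 1) := by
      rcases hji.eq_or_lt with rfl | h
      · exact_mod_cast hju
      · have : (j : ℝ) ≤ i := mod_cast Int.lt_add_one_iff.1 h
        linarith [(hε j).1, (hε (i + 1)).2]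
    exact hinj i ⟨hit, htu.trans hui⟩ ⟨hit.trans htu, hui⟩ hftu
  exact fun t u hftu => (le_total t u).elim (fun h => heq t u h hftu) fun h =>
    (heq u t h hftu.symm).symm

section Polygon

variable {E : Type*} [NormedAddCommGroup E] [NormedSpace ℝ E] {ε : ℤ → ℝ} {y : ℤ → E}

/-- The smooth corner of the polygonal line with vertices `y` at the vertex `y i`, which is reached
at the time `i`. -/
def polygonCorner (ε : ℤ → ℝ) (y : ℤ → E) (i : ℤ) (t : ℝ) : E :=
  smoothCorner (ε i) (y (i - 1)) (y i) (y (i + 1)) (t - i)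

/-- The polygonal line through the vertices `y i` at the times `i : ℤ`, with the corner at `y i`
smoothed out during the time interval `(i - ε i, i + ε i)`. -/
def smoothPolygon (ε : ℤ → ℝ) (y : ℤ → E) (t : ℝ) : E := polygonCorner ε y (round t) t

lemma polygonCorner_of_ge {i : ℤ} {t : ℝ} (hε : 0 < ε i) (ht : i + ε i ≤ t) :
    polygonCorner ε y i t = AffineMap.lineMap (y i) (y (i + 1)) (t - i) :=
  smoothCorner_of_ge hε (by linarith) _ _ _

lemma polygonCorner_add_one (hε : ∀ i, 0 < ε i) {i : ℤ} {t : ℝ}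
    (ht : t ∈ Icc (i + ε i) (i + 1 - ε (i + 1))) :
    polygonCorner ε y (i + 1) t = polygonCorner ε y i t := by
  rw [polygonCorner_of_ge (hε i) ht.1, polygonCorner, add_sub_cancel_right,
    smoothCorner_of_le (hε _) (by push_cast; linarith [ht.2])]
  congr 1
  push_cast
  ring

lemma smoothPolygon_eq_polygonCorner (hε : ∀ i, ε i ∈ Ioc 0 (1 / 4)) {i : ℤ} {t : ℝ}
    (ht : t ∈ Icc (i - 1 + ε (i - 1)) (i + 1 - ε (i + 1))) :
    smoothPolygon ε y t = polygonCorner ε y i t := by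
  have hpos := fun i => (hε i).1
  have hround := abs_le.1 (abs_sub_round t)
  have hlower : i - 1 ≤ round t := by
    have h : (i : ℝ) - 2 < round t := by linarith [ht.1, hpos (i - 1)]
    have := (mod_cast h : i - 2 < round t)
    omega
  have hupper : round t ≤ i + 1 := by
    have h : (round t : ℝ) < i + 2 := by linarith [ht.2, hpos (i + 1)]
    have := (mod_cast h : round t < i + 2)
    omega
  obtain h | h | h : round t = i - 1 ∨ round t = i ∨ round t = i + 1 := by omega
  · have hadd := polygonCorner_add_one (y := y) (t := t) hpos (i := i - 1)
    rw [sub_add_cancel] at hadd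
    rw [smoothPolygon, h]
    rw [h] at hround
    push_cast at hround hadd
    exact (hadd ⟨ht.1, by linarith [(hε i).2]⟩).symm
  · rw [smoothPolygon, h]
  · rw [smoothPolygon, h]
    rw [h] at hround
    push_cast at hround
    exact polygonCorner_add_one hpos ⟨by linarith [(hε i).2], ht.2⟩

lemma smoothPolygon_eventuallyEq (hε : ∀ i, ε i ∈ Ioc 0 (1 / 4)) (t : ℝ) :
    smoothPolygon ε y =ᶠ[𝓝 t] polygonCorner ε y (round t) := by
  have hround := abs_le.1 (abs_sub_round t)
  filter_upwards [Icc_mem_nhds (a := round t - 1 + ε (round t - 1))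
    (b := round t + 1 - ε (round t + 1)) (by linarith [(hε (round t - 1)).2])
    (by linarith [(hε (round t + 1)).2])] with u hu
  exact smoothPolygon_eq_polygonCorner hε hu

lemma smoothPolygon_contDiff (hε : ∀ i, ε i ∈ Ioc 0 (1 / 4)) :
    ContDiff ℝ (⊤ : ℕ∞) (smoothPolygon ε y) :=
  contDiff_iff_contDiffAt.2 fun t =>
    ((smoothCorner_contDiff _ _ _ _).comp (contDiff_id.sub contDiff_const)).contDiffAt
      |>.congr_of_eventuallyEq (smoothPolygon_eventuallyEq hε t)

lemma smoothPolygon_deriv_ne_zero (hε : ∀ i, ε i ∈ Ioc 0 (1 / 4))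
    (hy : ∀ i, 0 ∉ segment ℝ (y i - y (i - 1)) (y (i + 1) - y i)) (t : ℝ) :
    deriv (smoothPolygon ε y) t ≠ 0 := by
  obtain ⟨v, hv, hderiv⟩ := exists_mem_segment_smoothCorner_hasDerivAt (ε (round t))
    (y (round t - 1)) (y (round t)) (y (round t + 1)) (t - round t)
  have hcorner : HasDerivAt (polygonCorner ε y (round t)) v t := hderiv.comp_sub_const t _
  rw [(smoothPolygon_eventuallyEq hε t).deriv_eq, hcorner.deriv]
  exact ne_of_mem_of_not_mem hv (hy _)

lemma smoothPolygon_injOn (hε : ∀ i, ε i ∈ Ioc 0 (1 / 4)) {i : ℤ}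
    (hy : 0 ∉ segment ℝ (y i - y (i - 1)) (y (i + 1) - y i)) :
    InjOn (smoothPolygon ε y) (Icc (i - 1 + ε (i - 1)) (i + 1 - ε (i + 1))) := by
  intro t ht u hu htu
  rw [smoothPolygon_eq_polygonCorner hε ht, smoothPolygon_eq_polygonCorner hε hu] at htu
  exact sub_left_injective (smoothCorner_injective _ hy htu)

variable {C : ℤ → Set E}

lemma smoothPolygon_mem_inter (hε : ∀ i, ε i ∈ Ioc 0 (1 / 4))
    (hcorner : ∀ i s, |s| ≤ ε i →
      smoothCorner (ε i) (y (i - 1)) (y i) (y (i + 1)) s ∈ C i ∩ C (i + 1))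
    {i : ℤ} {t : ℝ} (ht : |t - i| ≤ ε i) : smoothPolygon ε y t ∈ C i ∩ C (i + 1) := by
  have ht' := abs_le.1 ht
  rw [smoothPolygon_eq_polygonCorner hε (i := i)]
  · exact hcorner i _ ht
  · constructor <;> linarith [(hε (i - 1)).2, (hε i).2, (hε (i + 1)).2]

lemma smoothPolygon_mem_of_mem_Icc (hε : ∀ i, ε i ∈ Ioc 0 (1 / 4)) (hC : ∀ i, Convex ℝ (C i))
    (hcorner : ∀ i s, |s| ≤ ε i →
      smoothCorner (ε i) (y (i - 1)) (y i) (y (i + 1)) s ∈ C i ∩ C (i + 1))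
    (hy : ∀ i, y i ∈ C i ∩ C (i + 1)) {i : ℤ} {t : ℝ} (ht : t ∈ Icc (i : ℝ) (i + 1)) :
    smoothPolygon ε y t ∈ C (i + 1) := by
  rcases le_or_gt t (i + ε i) with hl | hl
  · exact (smoothPolygon_mem_inter hε hcorner (abs_le.2 ⟨by linarith [ht.1, (hε i).1],
      by linarith⟩)).2
  rcases le_or_gt (i + 1 - ε (i + 1)) t with hr | hr
  · refine (smoothPolygon_mem_inter hε hcorner (abs_le.2 ⟨?_, ?_⟩)).1 <;> push_cast
    · linarith
    · linarith [ht.2, (hε (i + 1)).1]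
  · rw [smoothPolygon_eq_polygonCorner hε (i := i)
      ⟨by linarith [(hε i).1, (hε (i - 1)).2], hr.le⟩, polygonCorner_of_ge (hε i).1 hl.le]
    exact (hC _).lineMap_mem (hy i).2 (hy (i + 1)).1 ⟨by linarith [ht.1], by linarith [ht.2]⟩

lemma IsChordlessChain.exists_contDiff_injective (hC : IsChordlessChain C)
    (hopen : ∀ i, IsOpen (C i)) (hconv : ∀ i, Convex ℝ (C i)) :
    ∃ f : ℝ → E, ContDiff ℝ (⊤ : ℕ∞) f ∧ (∀ t, deriv f t ≠ 0) ∧ Function.Injective f ∧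
      ∀ t, f t ∈ C ⌈t⌉ := by
  choose y hy using fun i => not_disjoint_iff_nonempty_inter.1 (hC.not_disjoint_succ i)
  have hdisj : ∀ i, Disjoint (C (i - 1)) (C (i + 1)) := fun i => hC.disjoint (by omega)
  have hy_pred : ∀ i, y (i - 1) ∈ C i \ C (i + 1) := fun i =>
    ⟨by simpa using (hy (i - 1)).2, disjoint_left.1 (hdisj i) (hy (i - 1)).1⟩
  have hy_succ : ∀ i, y (i + 1) ∈ C (i + 1) \ C i := fun i =>
    ⟨(hy (i + 1)).1, disjoint_right.1 (hC.disjoint (by omega)) (hy (i + 1)).2⟩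
  have hseg : ∀ i, 0 ∉ segment ℝ (y i - y (i - 1)) (y (i + 1) - y i) := fun i =>
    zero_notMem_segment_sub (hconv i) (hconv (i + 1)) (hy_pred i) (hy i) (hy_succ i)
  choose ε hε hcorner using fun i => exists_forall_smoothCorner_mem (y (i - 1)) (y (i + 1))
    (((hopen i).inter (hopen (i + 1))).mem_nhds (hy i))
  have hmem : ∀ t, smoothPolygon ε y t ∈ C ⌈t⌉ := fun t => by
    have h := smoothPolygon_mem_of_mem_Icc hε hconv hcorner hy (i := ⌈t⌉ - 1) (t := t)
      ⟨by push_cast; linarith [Int.ceil_lt_add_one t], by push_cast; linarith [Int.le_ceil t]⟩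
    rwa [sub_add_cancel] at h
  exact ⟨smoothPolygon ε y, smoothPolygon_contDiff hε, smoothPolygon_deriv_ne_zero hε hseg,
    hC.injective_of_injOn_Icc (fun i => ⟨(hε i).1.le, (hε i).2.trans (by norm_num)⟩) hmem
      (fun _ _ => smoothPolygon_mem_inter hε hcorner) fun i => smoothPolygon_injOn hε (hseg i),
    hmem⟩

end Polygon

lemma isArcFrom_image_Icc {X : Type*} [TopologicalSpace X] {γ : ℝ → X} {a b : ℝ} (hab : a < b)
    (hγ : ContinuousOn γ (Icc a b)) (hinj : InjOn γ (Icc a b)) :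
    IsArcFrom (γ '' Icc a b) (γ a) (γ b) := by
  have himage : AffineMap.lineMap a b '' Icc (0 : ℝ) 1 = Icc a b := by
    rw [← segment_eq_image_lineMap, segment_eq_Icc hab.le]
  have hmaps : MapsTo (AffineMap.lineMap a b) (Icc (0 : ℝ) 1) (Icc a b) :=
    mapsTo_iff_image_subset.2 himage.subset
  refine ⟨γ ∘ AffineMap.lineMap a b, hγ.comp AffineMap.lineMap_continuous.continuousOn hmaps,
    hinj.comp (AffineMap.lineMap_injective ℝ hab.ne).injOn hmaps, ?_, by simp, by simp⟩
  rw [image_comp, himage]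

lemma insert_insert_Ioo {α : Type*} [LinearOrder α] {a b : α} (hab : a < b) :
    insert a (insert b (Ioo a b)) = Icc a b := by
  rw [Ioo_insert_right hab, Ioc_insert_left hab.le]

lemma injOn_Icc_of_injOn_Ioo {α β : Type*} [LinearOrder α] {g : α → β} {a b : α} (hab : a < b)
    (hinj : InjOn g (Ioo a b)) (ha : g a ∉ g '' Ioo a b) (hb : g b ∉ g '' Ioo a b)
    (hne : g a ≠ g b) : InjOn g (Icc a b) := by
  rw [← insert_insert_Ioo hab, injOn_insert (by simp [hab.ne]), injOn_insert (by simp),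
    image_insert_eq]
  exact ⟨⟨hinj, hb⟩, by simp [hne, ha]⟩

lemma exists_continuousOn_Icc_eqOn_comp_tan {X : Type*} [TopologicalSpace X] [T3Space X]
    {f : ℝ → X} {p q : X} (hf : Continuous f) (hinj : Function.Injective f)
    (hbot : Tendsto f atBot (𝓝 p)) (htop : Tendsto f atTop (𝓝 q))
    (hp : p ∉ range f) (hq : q ∉ range f) (hpq : p ≠ q) :
    ∃ g : ℝ → X, ContinuousOn g (Icc (-(Real.pi / 2)) (Real.pi / 2)) ∧
      InjOn g (Icc (-(Real.pi / 2)) (Real.pi / 2)) ∧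
      g (-(Real.pi / 2)) = p ∧ g (Real.pi / 2) = q ∧
      EqOn g (f ∘ Real.tan) (Ioo (-(Real.pi / 2)) (Real.pi / 2)) ∧
      g '' Ioo (-(Real.pi / 2)) (Real.pi / 2) = range f := by
  have hpi : -(Real.pi / 2) < Real.pi / 2 := by linarith [Real.pi_pos]
  have hcont := hf.comp_continuousOn Real.continuousOn_tan_Ioo
  have hleft := hbot.comp Real.tendsto_tan_neg_pi_div_two
  have hright := htop.comp Real.tendsto_tan_pi_div_two
  set g := extendFrom (Ioo (-(Real.pi / 2)) (Real.pi / 2)) (f ∘ Real.tan)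
  have hg_left : g (-(Real.pi / 2)) = p := eq_lim_at_left_extendFrom_Ioo hpi hleft
  have hg_right : g (Real.pi / 2) = q := eq_lim_at_right_extendFrom_Ioo hpi hright
  have hg : EqOn g (f ∘ Real.tan) (Ioo (-(Real.pi / 2)) (Real.pi / 2)) := fun u hu =>
    extendFrom_eq (subset_closure hu) (hcont u hu)
  have himage : g '' Ioo (-(Real.pi / 2)) (Real.pi / 2) = range f := by
    rw [hg.image_eq, image_comp, Real.image_tan_Ioo, image_univ]
  have hg_inj : InjOn g (Icc (-(Real.pi / 2)) (Real.pi / 2)) :=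
    injOn_Icc_of_injOn_Ioo hpi (hg.injOn_iff.2 (hinj.comp_injOn Real.injOn_tan))
      (himage ▸ hg_left ▸ hp) (himage ▸ hg_right ▸ hq) (hg_left ▸ hg_right ▸ hpq)
  exact ⟨g, continuousOn_Icc_extendFrom_Ioo hcont hleft hright, hg_inj, hg_left, hg_right, hg,
    himage⟩

lemma isArcFrom_insert_range {X : Type*} [TopologicalSpace X] [T3Space X]
    {f : ℝ → X} {p q : X} (hf : Continuous f) (hinj : Function.Injective f)
    (hbot : Tendsto f atBot (𝓝 p)) (htop : Tendsto f atTop (𝓝 q))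
    (hp : p ∉ range f) (hq : q ∉ range f) (hpq : p ≠ q) :
    IsArcFrom (insert p (insert q (range f))) p q := by
  obtain ⟨g, hg, hg_inj, rfl, rfl, -, himage⟩ :=
    exists_continuousOn_Icc_eqOn_comp_tan hf hinj hbot htop hp hq hpq
  have hpi : -(Real.pi / 2) < Real.pi / 2 := by linarith [Real.pi_pos]
  rw [← himage, ← image_insert_eq, ← image_insert_eq, insert_insert_Ioo hpi]
  exact isArcFrom_image_Icc hpi hg hg_inj

lemma isSmoothOpenArc_range {E : Type*} [NormedAddCommGroup E] [NormedSpace ℝ E]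
    {f : ℝ → E} {p q : E} (hf : ContDiff ℝ (⊤ : ℕ∞) f)
    (hderiv : ∀ t, deriv f t ≠ 0) (hinj : Function.Injective f)
    (hbot : Tendsto f atBot (𝓝 p)) (htop : Tendsto f atTop (𝓝 q))
    (hp : p ∉ range f) (hq : q ∉ range f) (hpq : p ≠ q) : IsSmoothOpenArc (range f) := by
  obtain ⟨g, hg, hg_inj, -, -, hg_eq, himage⟩ :=
    exists_continuousOn_Icc_eqOn_comp_tan hf.continuous hinj hbot htop hp hq hpq
  have hcos : ∀ u ∈ Ioo (-(Real.pi / 2)) (Real.pi / 2), Real.cos u ≠ 0 := fun u hu =>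
    (Real.cos_pos_of_mem_Ioo hu).ne'
  refine ⟨-(Real.pi / 2), Real.pi / 2, g, by linarith [Real.pi_pos], ?_, fun u hu => ?_,
    hg_inj.mono Ioo_subset_Icc_self, ?_, himage⟩
  · exact ContDiffOn.congr (fun u hu => (hf.contDiffAt.comp u
      (Real.contDiffAt_tan.2 (hcos u hu))).contDiffWithinAt) hg_eq
  · rw [derivWithin_congr hg_eq (hg_eq hu), derivWithin_of_isOpen isOpen_Ioo hu,
      deriv.scomp u (hf.differentiable (by simp) _) (Real.differentiableAt_tan.2 (hcos u hu)),
      Real.deriv_tan]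
    exact smul_ne_zero (one_div_ne_zero (pow_ne_zero 2 (hcos u hu))) (hderiv _)
  · exact (isEmbedding_domRestrict isCompact_Icc hg hg_inj).comp
      (IsEmbedding.inclusion Ioo_subset_Icc_self)

lemma IsLocallyAccessible.exists_contDiff_tendsto {E : Type*} [NormedAddCommGroup E]
    [NormedSpace ℝ E] {K U : Set E} {p q w : E} (hp : IsLocallyAccessible K p)
    (hq : IsLocallyAccessible K q) (hK : IsClosed K) (hU : IsOpen U) (hpK : p ∈ K) (hqK : q ∈ K)
    (hpU : p ∈ U) (hqU : q ∈ U) (hpq : p ≠ q)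
    (hpw : p ∈ closure (connectedComponentIn (U \ K) w))
    (hqw : q ∈ closure (connectedComponentIn (U \ K) w)) :
    ∃ f : ℝ → E, ContDiff ℝ (⊤ : ℕ∞) f ∧ (∀ u, deriv f u ≠ 0) ∧ Function.Injective f ∧
      range f ⊆ U \ K ∧ Tendsto f atBot (𝓝 p) ∧ Tendsto f atTop (𝓝 q) := by
  obtain ⟨L, hwL, hL_cell, hL, hLp⟩ := hp.exists_isChordlessChain hK hpK hU hpU hpw
  obtain ⟨R, hwR, hR_cell, hR, hRq⟩ := hq.exists_isChordlessChain hK hqK hU hqU hqw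
  obtain ⟨m, k, hC⟩ := hL.exists_bilateral hR hLp hRq hpq
    (fun n h => ((hR_cell n).closure_subset h).2 hpK)
    (fun n h => ((hL_cell n).closure_subset h).2 hqK) (not_disjoint_iff.2 ⟨w, hwL, hwR⟩)
  set C := bilateral (fun n => L (m + n)) fun n => R (k + n)
  have hcell : ∀ i, IsCell (U \ K) (C i) :=
    forall_bilateral (fun n => hL_cell (m + n)) fun n => hR_cell (k + n)
  have hadd : ∀ n : ℕ, Tendsto (n + ·) atTop atTop := fun n =>
    tendsto_atTop_mono (Nat.le_add_left · n) tendsto_id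
  have hCp : Tendsto C atBot (𝓝 p).smallSets := tendsto_bilateral_atBot _ (hLp.comp (hadd m))
  have hCq : Tendsto C atTop (𝓝 q).smallSets := tendsto_bilateral_atTop _ (hRq.comp (hadd k))
  obtain ⟨f, hf, hf_deriv, hf_inj, hfC⟩ :=
    hC.exists_contDiff_injective (fun i => (hcell i).isOpen) fun i => (hcell i).convex
  exact ⟨f, hf, hf_deriv, hf_inj,
    range_subset_iff.2 fun u => (hcell _).closure_subset (subset_closure (hfC u)),
    (hCp.comp tendsto_ceil_atBot).of_smallSets (.of_forall hfC),
    (hCq.comp tendsto_ceil_atTop).of_smallSets (.of_forall hfC)⟩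

lemma exists_mem_closure_connectedComponentIn_of_image_Icc_subset {γ : ℝ → ℂ} {a b s t : ℝ}
    (hγ : ContinuousOn γ (Icc a b)) (hinj : InjOn γ (Icc a b)) (has : a ≤ s) (hst : s ≤ t)
    (htb : t ≤ b) {U : Set ℂ} (hU : IsOpen U) (hsub : γ '' Icc s t ⊆ U) :
    ∃ w, γ s ∈ closure (connectedComponentIn (U \ γ '' Icc a b) w) ∧
      γ t ∈ closure (connectedComponentIn (U \ γ '' Icc a b) w) := by
  have hs : s ∈ Icc a b := ⟨has, hst.trans htb⟩
  have hdense : Dense (γ '' Icc a b)ᶜ :=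
    interior_eq_empty_iff_dense_compl.1 (interior_image_Icc_eq_empty (by simp) hγ hinj)
  have hmem : γ s ∈ U := hsub (mem_image_of_mem γ (left_mem_Icc.2 hst))
  obtain ⟨w, hw, hwγ⟩ := mem_closure_iff_frequently.1 (hdense (γ s))
    |>.and_eventually (isLocallyAccessible_image_Icc hγ hinj hs U hU hmem) |>.exists
  exact ⟨w, hwγ hw, mem_closure_connectedComponentIn_of_le hγ hinj hU has hst htb hsub (hwγ hw)⟩

lemma exists_contDiff_tendsto_complex {γ : ℝ → ℂ} {a b s t : ℝ}
    (hγ : ContinuousOn γ (Icc a b)) (hinj : InjOn γ (Icc a b)) (has : a ≤ s) (hst : s < t)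
    (htb : t ≤ b) {U : Set ℂ} (hU : IsOpen U) (hsub : γ '' Icc s t ⊆ U) :
    ∃ f : ℝ → ℂ, ContDiff ℝ (⊤ : ℕ∞) f ∧ (∀ u, deriv f u ≠ 0) ∧ Function.Injective f ∧
      range f ⊆ U \ γ '' Icc a b ∧ Tendsto f atBot (𝓝 (γ s)) ∧ Tendsto f atTop (𝓝 (γ t)) := by
  have hs : s ∈ Icc a b := ⟨has, hst.le.trans htb⟩
  have ht : t ∈ Icc a b := ⟨has.trans hst.le, htb⟩
  obtain ⟨w, hws, hwt⟩ := exists_mem_closure_connectedComponentIn_of_image_Icc_subset hγ hinj has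
    hst.le htb hU hsub
  exact (isLocallyAccessible_image_Icc hγ hinj hs).exists_contDiff_tendsto
    (isLocallyAccessible_image_Icc hγ hinj ht) (isCompact_Icc.image_of_continuousOn hγ).isClosed hU
    (mem_image_of_mem γ hs) (mem_image_of_mem γ ht)
    (hsub (mem_image_of_mem γ (left_mem_Icc.2 hst.le)))
    (hsub (mem_image_of_mem γ (right_mem_Icc.2 hst.le))) (hinj.ne hs ht hst.ne) hws hwt

theorem exists_contDiff_tendsto {E : Type*} [NormedAddCommGroup E] [NormedSpace ℝ E]
    (hE : Module.finrank ℝ E = 2) {γ : ℝ → E} {a b s t : ℝ}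
    (hγ : ContinuousOn γ (Icc a b)) (hinj : InjOn γ (Icc a b)) (has : a ≤ s) (hst : s < t)
    (htb : t ≤ b) {U : Set E} (hU : IsOpen U) (hsub : γ '' Icc s t ⊆ U) :
    ∃ f : ℝ → E, ContDiff ℝ (⊤ : ℕ∞) f ∧ (∀ u, deriv f u ≠ 0) ∧ Function.Injective f ∧
      range f ⊆ U \ γ '' Icc a b ∧ Tendsto f atBot (𝓝 (γ s)) ∧ Tendsto f atTop (𝓝 (γ t)) := by
  have : FiniteDimensional ℝ E := FiniteDimensional.of_finrank_pos (by omega)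
  let e : ℂ ≃L[ℝ] E := .ofFinrankEq (by rw [Complex.finrank_real_complex, hE])
  have hlift : ∀ {l : Filter ℝ} {f : ℝ → ℂ} {x : E}, Tendsto f l (𝓝 (e.symm x)) →
      Tendsto (e ∘ f) l (𝓝 x) := fun h => by
    simpa using (e.continuous.tendsto _).comp h
  obtain ⟨f, hf, hf_deriv, hf_inj, hf_range, hf_bot, hf_top⟩ :=
    exists_contDiff_tendsto_complex (γ := e.symm ∘ γ) (e.symm.continuous.comp_continuousOn hγ)
      (e.symm.injective.comp_injOn hinj) has hst htb (hU.preimage e.continuous)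
      (by rwa [image_comp, image_subset_iff, ← preimage_comp, e.self_comp_symm])
  refine ⟨e ∘ f, e.contDiff.comp hf, fun u => ?_, e.injective.comp hf_inj, ?_, hlift hf_bot,
    hlift hf_top⟩
  · have hderiv := e.hasFDerivAt.comp_hasDerivAt u (hf.differentiable (by simp) u).hasDerivAt
    rw [hderiv.deriv]
    exact (map_ne_zero_iff e e.injective).2 (hf_deriv u)
  · rw [range_comp, image_subset_iff]
    rwa [image_comp, e.symm.image_eq_preimage_symm] at hf_range

end PlaneArc

theorem stmt_8_general {E : Type*} [NormedAddCommGroup E] [NormedSpace ℝ E]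
    (hE : Module.finrank ℝ E = 2) {γ : ℝ → E} {a b s t : ℝ} (hγ : ContinuousOn γ (Icc a b))
    (hinj : InjOn γ (Icc a b)) (hs : s ∈ Icc a b) (ht : t ∈ Icc a b) (hst : s < t) {Ω : Set E}
    (hΩ : IsOpen Ω) (hsub : γ '' Icc s t ⊆ Ω) :
    ∃ J : Set E, IsArcFrom J (γ s) (γ t) ∧ J ⊆ Ω ∧ J ∩ γ '' Icc a b = {γ s, γ t} ∧
      IsSmoothOpenArc (J \ {γ s, γ t}) := by
  obtain ⟨f, hf, hf_deriv, hf_inj, hf_range, hf_bot, hf_top⟩ :=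
    PlaneArc.exists_contDiff_tendsto hE hγ hinj hs.1 hst ht.2 hΩ hsub
  have hdisj : Disjoint (range f) (γ '' Icc a b) := (subset_sdiff.1 hf_range).2
  have hends : {γ s, γ t} ⊆ γ '' Icc a b :=
    pair_subset (mem_image_of_mem γ hs) (mem_image_of_mem γ ht)
  have hs_range : γ s ∉ range f := disjoint_right.1 hdisj (hends (mem_insert _ _))
  have ht_range : γ t ∉ range f := disjoint_right.1 hdisj (mem_image_of_mem γ ht)
  have hne : γ s ≠ γ t := hinj.ne hs ht hst.ne
  refine ⟨{γ s, γ t} ∪ range f, ?_, union_subset ?_ (hf_range.trans sdiff_subset), ?_, ?_⟩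
  · rw [insert_union, singleton_union]
    exact PlaneArc.isArcFrom_insert_range hf.continuous hf_inj hf_bot hf_top hs_range ht_range hne
  · exact (pair_subset (mem_image_of_mem γ (left_mem_Icc.2 hst.le))
      (mem_image_of_mem γ (right_mem_Icc.2 hst.le))).trans hsub
  · rw [union_inter_distrib_right, hdisj.inter_eq, union_empty, inter_eq_left.2 hends]
  · rw [union_sdiff_cancel_left (hdisj.symm.mono_left hends).le_bot]
    exact PlaneArc.isSmoothOpenArc_range hf hf_deriv hf_inj hf_bot hf_top hs_range ht_range hne

/-- In `ℝ²`: given an arc `λ`, two points `a = γ s`, `a' = γ t` on it and a neighborhood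
`Ω` of the subarc between them, there is an arc in `Ω` from `a` to `a'` meeting `λ` only
at its endpoints, smooth off its endpoints. -/
theorem stmt_8 (γ : ℝ → (Fin 2 → ℝ)) (hγcont : ContinuousOn γ (Icc 0 1))
    (hγinj : InjOn γ (Icc 0 1)) (lam : Set (Fin 2 → ℝ)) (hlam : γ '' Icc 0 1 = lam)
    (s t : ℝ) (hs : s ∈ Icc (0:ℝ) 1) (ht : t ∈ Icc (0:ℝ) 1) (hst : s < t)
    (a a' : Fin 2 → ℝ) (ha : γ s = a) (ha' : γ t = a')
    (Ω : Set (Fin 2 → ℝ)) (hΩopen : IsOpen Ω) (hsub : γ '' Icc s t ⊆ Ω) :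
    ∃ J : Set (Fin 2 → ℝ), IsArcFrom J a a' ∧ J ⊆ Ω ∧ J ∩ lam = {a, a'} ∧
      IsSmoothOpenArc (J \ {a, a'}) := by
  subst ha ha' hlam
  exact stmt_8_general (by simp) hγcont hγinj hs ht hst hΩopen hsub

end
end

section
/- Let Ω be a connected open set in ℝ², and let J₁, …, Jₙ be finitely many pairwise disjoint arcs contained in Ω. Then Ω \ (J₁ ∪ ⋯ ∪ Jₙ) is connected. -/
open Set MvPolynomial Topology MeasureTheory

noncomputable section

/-!
Janiszewski's argument through continuous logarithms. If `A` and `B` are connected open sets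
covering a space on which every continuous function to `ℂ \ {0}` is an exponential, then `A ∩ B` is
connected: given a relatively clopen `V ⊆ A ∩ B`, write `2πi · 1_V = φ - ψ` with `φ` continuous
on `A` and `ψ` on `B`; then `exp φ = exp ψ` is a continuous function without zeros on the whole
space, and comparing `φ` and `ψ` with a logarithm `G` of it shows that `1_V` is constant.
With `A = Ω` and `B = Jᶜ` this removes one arc `J` at a time, once `Jᶜ` is known to be connected.

For the latter (Borsuk), suppose `Jᶜ` had a bounded component `V` containing `p`. Since `J` embeds
as a retract of the line, `z - p` has a logarithm on `J`. Replacing `z - p` on `V` by the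
exponential of a continuous extension of that logarithm gives a continuous function without zeros
on the plane, hence an exponential, which agrees with `z - p` on a large circle around `p`; but
`z - p` has no continuous logarithm there.
-/

section Separation

theorem isPreconnected_of_forall_disjoint_open {X : Type*} [TopologicalSpace X] {s : Set X}
    (hs : IsOpen s)
    (h : ∀ U V : Set X, IsOpen U → IsOpen V → Disjoint U V → U ∪ V = s → U = ∅ ∨ V = ∅) :
    IsPreconnected s := by
  rw [isPreconnected_iff_subset_of_disjoint]
  intro U V hU hV hsUV hUV
  have hdisj : Disjoint (s ∩ U) (s ∩ V) := by
    rwa [disjoint_iff_inter_eq_empty, ← inter_inter_distrib_left]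
  have hcover : s ∩ U ∪ s ∩ V = s := by
    rw [← inter_union_distrib_left, inter_eq_left.2 hsUV]
  rcases h _ _ (hs.inter hU) (hs.inter hV) hdisj hcover with hempty | hempty
  · right
    rw [hempty, empty_union] at hcover
    exact inter_eq_left.1 hcover
  · left
    rw [hempty, union_empty] at hcover
    exact inter_eq_left.1 hcover

theorem disjoint_frontier_union_of_isOpen {X : Type*} [TopologicalSpace X] {U V : Set X}
    (hU : IsOpen U) (hV : IsOpen V) (hUV : Disjoint U V) : Disjoint (frontier V) (U ∪ V) :=
  disjoint_union_right.2 ⟨hUV.symm.frontier_left hU, disjoint_frontier_iff_isOpen.2 hV⟩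

theorem isPreconnected_compl_closedBall {E : Type*} [NormedAddCommGroup E] [NormedSpace ℝ E]
    (hE : 1 < Module.rank ℝ E) (c : E) {r : ℝ} (hr : 0 ≤ r) :
    IsPreconnected (Metric.closedBall c r)ᶜ := by
  have hpolar : (Metric.closedBall c r)ᶜ =
      (fun q : ℝ × E => c + q.1 • q.2) '' (Ioi r ×ˢ Metric.sphere 0 1) := by
    ext z
    simp only [mem_compl_iff, Metric.mem_closedBall, dist_eq_norm, not_le, mem_image, mem_prod,
      mem_Ioi, mem_sphere_zero_iff_norm, Prod.exists]
    constructor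
    · intro hz
      have hne : ‖z - c‖ ≠ 0 := (hr.trans_lt hz).ne'
      exact ⟨‖z - c‖, ‖z - c‖⁻¹ • (z - c), ⟨hz, by simp [norm_smul, hne]⟩, by simp [hne]⟩
    · rintro ⟨t, v, ⟨ht, hv⟩, rfl⟩
      rwa [add_sub_cancel_left, norm_smul, hv, mul_one, Real.norm_of_nonneg (hr.trans ht.le)]
  rw [hpolar]
  exact (isPreconnected_Ioi.prod (isPreconnected_sphere hE 0 1)).image _ (by fun_prop)

end Separation

/-- Every continuous map from `X` to `ℂ \ {0}` has a continuous logarithm. This is Eilenberg's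
property (b), for compact Hausdorff `X` the vanishing of the first Čech cohomology group with
integer coefficients. -/
def HasContinuousLogs (X : Type*) [TopologicalSpace X] : Prop :=
  ∀ f : X → ℂ, Continuous f → (∀ x, f x ≠ 0) →
    ∃ g : X → ℂ, Continuous g ∧ ∀ x, Complex.exp (g x) = f x

theorem hasContinuousLogs_of_simplyConnectedSpace (X : Type*) [TopologicalSpace X]
    [SimplyConnectedSpace X] [LocallyPathConnectedSpace X] : HasContinuousLogs X := by
  intro f hf hf0
  obtain ⟨x₀⟩ : Nonempty X := inferInstance
  obtain ⟨g, ⟨-, hg⟩, -⟩ := Complex.isCoveringMapOn_exp.existsUnique_continuousMap_lifts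
    ⟨f, hf⟩ (Complex.exp_log (hf0 x₀)) hf0
  exact ⟨g, g.continuous, congrFun hg⟩

theorem HasContinuousLogs.of_leftInverse {X Y : Type*} [TopologicalSpace X] [TopologicalSpace Y]
    (hX : HasContinuousLogs X) {r : X → Y} {i : Y → X} (hr : Continuous r) (hi : Continuous i)
    (hri : Function.LeftInverse r i) : HasContinuousLogs Y := by
  intro f hf hf0
  obtain ⟨g, hg, hgf⟩ := hX (f ∘ r) (hf.comp hr) fun x => hf0 (r x)
  exact ⟨g ∘ i, hg.comp hi, fun y => by simp [hgf, hri y]⟩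

theorem hasContinuousLogs_unitInterval : HasContinuousLogs unitInterval :=
  (hasContinuousLogs_of_simplyConnectedSpace ℝ).of_leftInverse continuous_projIcc
    continuous_subtype_val (projIcc_val zero_le_one)

theorem sub_eq_sub_of_exp_eq_exp {X : Type*} [TopologicalSpace X] {s : Set X}
    (hs : IsPreconnected s) {f g : X → ℂ} (hf : ContinuousOn f s) (hg : ContinuousOn g s)
    (hfg : ∀ x ∈ s, Complex.exp (f x) = Complex.exp (g x)) {x y : X} (hx : x ∈ s) (hy : y ∈ s) :
    f x - g x = f y - g y := by
  have hdiscrete : IsDiscrete (Complex.exp ⁻¹' {1}) :=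
    ⟨(Complex.isCoveringMapOn_exp 1 one_ne_zero).1⟩
  refine hs.constant_of_mapsTo hdiscrete (hf.sub hg) (fun z hz => ?_) hx hy
  simp [Complex.exp_sub, hfg z hz]

section Unicoherence

variable {X : Type*} [TopologicalSpace X] [NormalSpace X] {A B V : Set X}

theorem exists_continuousOn_sub_eq_indicator {E : Type*} [AddCommGroup E] [Module ℝ E]
    [TopologicalSpace E] [ContinuousSMul ℝ E] (hA : IsOpen A) (hB : IsOpen B)
    (hAB : A ∪ B = univ) (hV : Disjoint (frontier V) (A ∩ B)) (c : E) :
    ∃ φ ψ : X → E, ContinuousOn φ A ∧ ContinuousOn ψ B ∧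
      ∀ x, φ x - ψ x = V.indicator (fun _ => c) x := by
  classical
  have hcompl : Disjoint Aᶜ Bᶜ := by
    rw [disjoint_compl_left_iff_subset, compl_subset_iff_union, union_comm, hAB]
  obtain ⟨χ, hχA, hχB, -⟩ :=
    exists_continuous_zero_one_of_isClosed hA.isClosed_compl hB.isClosed_compl hcompl
  refine ⟨V.piecewise (fun x => (1 - χ x) • c) 0, V.piecewise (fun x => -χ x • c) 0, ?_, ?_, ?_⟩
  · refine ContinuousOn.piecewise (fun x ⟨hxA, hxV⟩ => ?_) (by fun_prop) continuousOn_const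
    have hxB : x ∈ Bᶜ := fun hxB => disjoint_left.1 hV hxV ⟨hxA, hxB⟩
    simp [hχB hxB]
  · refine ContinuousOn.piecewise (fun x ⟨hxB, hxV⟩ => ?_) (by fun_prop) continuousOn_const
    have hxA : x ∈ Aᶜ := fun hxA => disjoint_left.1 hV hxV ⟨hxA, hxB⟩
    simp [hχA hxA]
  · intro x
    by_cases hx : x ∈ V
    · simp [hx, sub_smul]
    · simp [hx]

theorem HasContinuousLogs.isConnected_inter [PreconnectedSpace X] (hX : HasContinuousLogs X)
    (hA : IsOpen A) (hB : IsOpen B) (hAc : IsConnected A) (hBc : IsConnected B)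
    (hAB : A ∪ B = univ) : IsConnected (A ∩ B) := by
  refine ⟨nonempty_inter hA hB hAB hAc.nonempty hBc.nonempty,
    isPreconnected_of_forall_disjoint_open (hA.inter hB) fun U V hU hV hUV hcover => ?_⟩
  by_contra! ⟨⟨u, hu⟩, ⟨v, hv⟩⟩
  have huV : u ∉ V := disjoint_left.1 hUV hu
  have huAB : u ∈ A ∩ B := hcover ▸ Or.inl hu
  have hvAB : v ∈ A ∩ B := hcover ▸ Or.inr hv
  obtain ⟨φ, ψ, hφ, hψ, hφψ⟩ := exists_continuousOn_sub_eq_indicator hA hB hAB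
    (hcover ▸ disjoint_frontier_union_of_isOpen hU hV hUV) (2 * Real.pi * Complex.I)
  have hexp (x : X) : Complex.exp (φ x) = Complex.exp (ψ x) := by
    rw [← sub_add_cancel (φ x) (ψ x), hφψ]
    by_cases hx : x ∈ V <;> simp [hx, Complex.exp_add]
  have hcont : Continuous fun x => Complex.exp (φ x) := by
    rw [← continuousOn_univ, ← hAB]
    exact hφ.cexp.union_of_isOpen (hψ.cexp.congr fun x _ => hexp x) hA hB
  obtain ⟨G, hG, hGexp⟩ := hX _ hcont fun x => Complex.exp_ne_zero _
  have hφG : φ u - G u = φ v - G v := sub_eq_sub_of_exp_eq_exp hAc.isPreconnected hφ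
    hG.continuousOn (fun x _ => (hGexp x).symm) huAB.1 hvAB.1
  have hψG : ψ u - G u = ψ v - G v := sub_eq_sub_of_exp_eq_exp hBc.isPreconnected hψ
    hG.continuousOn (fun x _ => ((hGexp x).trans (hexp x)).symm) huAB.2 hvAB.2
  have hu0 : φ u - ψ u = 0 := by simp [hφψ, huV]
  have hv2 : φ v - ψ v = 2 * Real.pi * Complex.I := by simp [hφψ, hv]
  exact Complex.two_pi_I_ne_zero (by linear_combination hψG - hφG + hu0 - hv2)

end Unicoherence

section PlaneSeparation

open Complex in
theorem not_forall_mem_sphere_exp_eq_sub {p : ℂ} {r : ℝ} (hr : 0 < r) {g : ℂ → ℂ}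
    (hg : ContinuousOn g (Metric.sphere p r)) :
    ¬ ∀ z ∈ Metric.sphere p r, exp (g z) = z - p := by
  intro hexp
  have hmem (θ : ℝ) : circleMap p r θ ∈ Metric.sphere p r := circleMap_mem_sphere p hr.le θ
  have hlog (θ : ℝ) : exp (g (circleMap p r θ)) = exp (Real.log r + θ * I) := by
    rw [hexp _ (hmem θ), circleMap_sub_center, circleMap_zero, exp_add, ← ofReal_exp,
      Real.exp_log hr]
  have hconst := sub_eq_sub_of_exp_eq_exp isPreconnected_univ
    (hg.comp (continuous_circleMap p r).continuousOn fun θ _ => hmem θ)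
    (g := fun θ : ℝ => Real.log r + θ * I) (by fun_prop) (fun θ _ => hlog θ)
    (mem_univ 0) (mem_univ (2 * Real.pi))
  have hperiod : circleMap p r (2 * Real.pi) = circleMap p r 0 := by simp [circleMap]
  simp [hperiod] at hconst

theorem not_forall_mem_frontier_exp_eq_sub {V : Set ℂ} (hV : Bornology.IsBounded V) {p : ℂ}
    (hp : p ∈ V) {g : ℂ → ℂ} (hg : Continuous g) :
    ¬ ∀ z ∈ frontier V, Complex.exp (g z) = z - p := by
  classical
  intro hexp
  set f : ℂ → ℂ := V.piecewise (fun z => Complex.exp (g z)) (fun z => z - p)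
  have hf : Continuous f := Continuous.piecewise hexp hg.cexp (by fun_prop)
  have hf0 (z : ℂ) : f z ≠ 0 := by
    by_cases hz : z ∈ V
    · simp [f, hz, Complex.exp_ne_zero]
    · simpa [f, hz, sub_eq_zero] using (ne_of_mem_of_not_mem hp hz).symm
  obtain ⟨H, hH, hHf⟩ := hasContinuousLogs_of_simplyConnectedSpace ℂ f hf hf0
  obtain ⟨r, hr, hVr⟩ := hV.subset_ball_lt 0 p
  refine not_forall_mem_sphere_exp_eq_sub (p := p) hr hH.continuousOn fun z hz => ?_
  have hzV : z ∉ V := fun hzV => (hVr hzV).ne hz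
  simp [hHf, f, hzV]

theorem HasContinuousLogs.eq_empty_of_frontier_subset {K V : Set ℂ} (hK : HasContinuousLogs K)
    (hKc : IsClosed K) (hV : Bornology.IsBounded V) (hKV : Disjoint K V) (hfr : frontier V ⊆ K) :
    V = ∅ := by
  by_contra! ⟨p, hp⟩
  have hpK : p ∉ K := disjoint_right.1 hKV hp
  obtain ⟨g, hg, hgexp⟩ := hK (fun z => z - p) (by fun_prop) fun z =>
    sub_ne_zero.2 (ne_of_mem_of_not_mem z.2 hpK)
  obtain ⟨h, hh⟩ := ContinuousMap.exists_restrict_eq hKc ⟨g, hg⟩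
  refine not_forall_mem_frontier_exp_eq_sub hV hp h.continuous fun z hz => ?_
  have hzK : h z = g ⟨z, hfr hz⟩ := DFunLike.congr_fun hh ⟨z, hfr hz⟩
  rw [hzK, hgexp]

theorem HasContinuousLogs.isPreconnected_compl {K : Set ℂ} (hK : HasContinuousLogs K)
    (hKc : IsCompact K) : IsPreconnected Kᶜ := by
  refine isPreconnected_of_forall_disjoint_open hKc.isClosed.isOpen_compl
    fun U V hU hV hUV hcover => ?_
  have eq_empty {W W' : Set ℂ} (hW : IsOpen W) (hW' : IsOpen W') (hWW' : Disjoint W W')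
      (hcover : W ∪ W' = Kᶜ) (hbdd : Bornology.IsBounded W') : W' = ∅ := by
    have hfr : Disjoint (frontier W') Kᶜ := hcover ▸ disjoint_frontier_union_of_isOpen hW hW' hWW'
    have hW'K : W' ⊆ Kᶜ := hcover ▸ subset_union_right
    exact hK.eq_empty_of_frontier_subset hKc.isClosed hbdd
      (subset_compl_iff_disjoint_left.1 hW'K) (disjoint_compl_right_iff_subset.1 hfr)
  have isBounded_of_disjoint {W W' : Set ℂ} {R : ℝ} (hWW' : Disjoint W W')
      (hout : (Metric.closedBall 0 R)ᶜ ⊆ W) : Bornology.IsBounded W' :=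
    Metric.isBounded_closedBall.subset
      (disjoint_compl_left_iff_subset.1 (hWW'.mono_left hout))
  obtain ⟨R, hR, hKR⟩ := hKc.isBounded.subset_closedBall_lt 0 0
  have hout : (Metric.closedBall 0 R)ᶜ ⊆ U ∪ V := hcover ▸ compl_subset_compl.2 hKR
  rcases (isPreconnected_compl_closedBall (by simp) 0 hR.le).subset_or_subset hU hV hUV hout with
    hU' | hV'
  · exact Or.inr (eq_empty hU hV hUV hcover (isBounded_of_disjoint hUV hU'))
  · exact Or.inl (eq_empty hV hU hUV.symm (union_comm V U ▸ hcover)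
      (isBounded_of_disjoint hUV.symm hV'))

theorem HasContinuousLogs.isConnected_compl_of_finrank_eq_two {E : Type*} [NormedAddCommGroup E]
    [NormedSpace ℝ E] (hE : Module.finrank ℝ E = 2) {K : Set E} (hK : HasContinuousLogs K)
    (hKc : IsCompact K) : IsConnected Kᶜ := by
  have : FiniteDimensional ℝ E := Module.finite_of_finrank_pos (by simp [hE])
  let e : E ≃ₜ ℂ := (ContinuousLinearEquiv.ofFinrankEq
    (hE.trans Complex.finrank_real_complex.symm)).toHomeomorph
  have hlogs : HasContinuousLogs (e '' K) :=
    hK.of_leftInverse (e.image K).continuous (e.image K).symm.continuous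
      (e.image K).apply_symm_apply
  have hcompact : IsCompact (e '' K) := hKc.image e.continuous
  rw [← e.isConnected_image, e.image_compl]
  exact ⟨nonempty_compl.2 hcompact.ne_univ, hlogs.isPreconnected_compl hcompact⟩

end PlaneSeparation

namespace IsArc

variable {α : Type*} [TopologicalSpace α] {J : Set α}

theorem isCompact (hJ : IsArc J) : IsCompact J := by
  obtain ⟨-, -, γ, hγ, -, rfl, -, -⟩ := hJ
  exact isCompact_Icc.image_of_continuousOn hγ

theorem nonempty_homeomorph_unitInterval [T2Space α] (hJ : IsArc J) :
    Nonempty (unitInterval ≃ₜ J) := by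
  obtain ⟨-, -, γ, hγ, hinj, rfl, -, -⟩ := hJ
  have hemb : IsClosedEmbedding ((Icc (0 : ℝ) 1).domRestrict γ) :=
    hγ.domRestrict.isClosedEmbedding hinj.injective
  exact ⟨hemb.isEmbedding.toHomeomorph.trans (.setCongr (range_domRestrict _ _))⟩

theorem hasContinuousLogs [T2Space α] (hJ : IsArc J) : HasContinuousLogs J := by
  obtain ⟨e⟩ := hJ.nonempty_homeomorph_unitInterval
  exact hasContinuousLogs_unitInterval.of_leftInverse e.continuous e.symm.continuous
    e.apply_symm_apply

end IsArc

theorem stmt_9_general {X : Type*} [TopologicalSpace X] [NormalSpace X] [PreconnectedSpace X]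
    (hX : HasContinuousLogs X) {Ω : Set X} (hΩ : IsOpen Ω) (hΩc : IsConnected Ω)
    {ι : Type*} [Finite ι] {K : ι → Set X} (hK : ∀ i, IsClosed (K i))
    (hKc : ∀ i, IsConnected (K i)ᶜ) (hdisj : Pairwise (Function.onFun Disjoint K))
    (hsub : ∀ i, K i ⊆ Ω) : IsConnected (Ω \ ⋃ i, K i) := by
  classical
  have := Fintype.ofFinite ι
  suffices h : ∀ s : Finset ι, IsConnected (Ω \ ⋃ i ∈ s, K i) by simpa using h Finset.univ
  intro s
  induction s using Finset.induction_on with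
  | empty => simpa using hΩc
  | insert i s his ih =>
    have hopen : IsOpen (Ω \ ⋃ j ∈ s, K j) :=
      hΩ.sdiff (s.finite_toSet.isClosed_biUnion fun j _ => hK j)
    have hKi : K i ⊆ Ω \ ⋃ j ∈ s, K j := subset_sdiff.2 ⟨hsub i,
      disjoint_iUnion₂_right.2 fun j hj => hdisj (ne_of_mem_of_not_mem hj his).symm⟩
    have hcover : (Ω \ ⋃ j ∈ s, K j) ∪ (K i)ᶜ = univ := by
      rwa [union_comm, ← compl_subset_iff_union, compl_compl]
    rw [Finset.set_biUnion_insert, union_comm, ← sdiff_sdiff, sdiff_eq]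
    exact hX.isConnected_inter hopen (hK i).isOpen_compl ih (hKc i) hcover

/-- Removing finitely many disjoint arcs from a connected open subset of `ℝ²` leaves a
connected set. -/
theorem stmt_9 (Ω : Set (Fin 2 → ℝ)) (hΩopen : IsOpen Ω) (hΩconn : IsConnected Ω)
    (n : ℕ) (J : Fin n → Set (Fin 2 → ℝ)) (harc : ∀ i, IsArc (J i))
    (hdisj : Pairwise (Function.onFun Disjoint J)) (hsub : ∀ i, J i ⊆ Ω) :
    IsConnected (Ω \ ⋃ i, J i) :=
  stmt_9_general (hasContinuousLogs_of_simplyConnectedSpace _) hΩopen hΩconn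
    (fun i => (harc i).isCompact.isClosed)
    (fun i => (harc i).hasContinuousLogs.isConnected_compl_of_finrank_eq_two (by simp)
      (harc i).isCompact) hdisj hsub

end
end

section
/- Let Ω be a connected open set in ℝ² and let J be an arc contained in Ω. Then Ω contains a connected open neighborhood V of J such that the complement ℝ² \ V is connected. -/
/-!
An arc `J` in the plane has connected complement, by Borsuk's argument. If the component `U` of a
point `p` in the complement of `J` were bounded, take a continuous logarithm of `z - p` on the
simply connected set `J`, extend it to the plane by Tietze, and replace `z - p` by the exponential
of this extension inside `U`. The result is continuous and vanishes nowhere, so it has a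
continuous logarithm on the whole plane; but it equals `z - p` on a large circle around `p`, where
no such logarithm exists.

Now let `B` be an open ball containing `J`. The compact set of points of the closed ball outside
`Ω ∩ B` lies in the connected open set `Jᶜ`, hence in a compact connected subset `D` of `Jᶜ`, and
`L = D ∪ Bᶜ` is closed, connected, disjoint from `J` and contains `Ωᶜ`. The component of `Lᶜ`
containing `J` is the required neighborhood: its complement is the union of `L` with the other
components of `Lᶜ`, and the closure of each of these meets `L`.
-/

open Set MvPolynomial Topology MeasureTheory

noncomputable section

section Components

variable {X : Type*} [TopologicalSpace X]

theorem connectedComponentIn_eq_of_inter_nonempty {F : Set X} {x y : X}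
    (h : (connectedComponentIn F x ∩ connectedComponentIn F y).Nonempty) :
    connectedComponentIn F x = connectedComponentIn F y := by
  obtain ⟨z, hzx, hzy⟩ := h
  exact (connectedComponentIn_eq hzx).trans (connectedComponentIn_eq hzy).symm

theorem frontier_connectedComponentIn_subset_compl [LocallyConnectedSpace X] {F : Set X}
    (hF : IsOpen F) (x : X) : frontier (connectedComponentIn F x) ⊆ Fᶜ := by
  intro y hy hyF
  have hyy : y ∈ connectedComponentIn F y := mem_connectedComponentIn hyF
  have hmeet : (connectedComponentIn F y ∩ connectedComponentIn F x).Nonempty :=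
    mem_closure_iff.1 hy.1 _ hF.connectedComponentIn hyy
  rw [connectedComponentIn_eq_of_inter_nonempty hmeet] at hyy
  exact hy.2 (hF.connectedComponentIn.interior_eq.symm ▸ hyy)

theorem isConnected_compl_connectedComponentIn_compl [PreconnectedSpace X]
    [LocallyConnectedSpace X] {L : Set X} (hLclosed : IsClosed L) (hL : IsConnected L) (x : X) :
    IsConnected (connectedComponentIn Lᶜ x)ᶜ := by
  obtain ⟨b, hb⟩ := hL.nonempty
  have hLo : IsOpen Lᶜ := hLclosed.isOpen_compl
  have hLV : L ⊆ (connectedComponentIn Lᶜ x)ᶜ :=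
    subset_compl_comm.1 (connectedComponentIn_subset _ _)
  refine ⟨⟨b, hLV hb⟩, isPreconnected_of_forall b fun y hy => ?_⟩
  by_cases hyL : y ∈ L
  · exact ⟨L, hLV, hb, hyL, hL.isPreconnected⟩
  let O := connectedComponentIn Lᶜ y
  have hyO : y ∈ O := mem_connectedComponentIn hyL
  have hOV : Disjoint O (connectedComponentIn Lᶜ x) := by
    rw [disjoint_iff_inter_eq_empty, ← not_nonempty_iff_eq_empty]
    intro hmeet
    exact hy (connectedComponentIn_eq_of_inter_nonempty hmeet ▸ hyO)
  have hOne : O ≠ univ := fun h => connectedComponentIn_subset _ _ (h ▸ mem_univ b : b ∈ O) hb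
  obtain ⟨w, hw⟩ : (frontier O).Nonempty := nonempty_frontier_iff.2 ⟨⟨y, hyO⟩, hOne⟩
  have hwL : w ∈ L := not_not.1 (frontier_connectedComponentIn_subset_compl hLo y hw)
  exact ⟨closure O ∪ L,
    union_subset (hOV.closure_left hLo.connectedComponentIn).subset_compl_right hLV,
    .inr hb, .inl (subset_closure hyO),
    isPreconnected_connectedComponentIn.closure.union w hw.1 hwL hL.isPreconnected⟩

theorem exists_isCompact_isConnected_mem_nhds [T2Space X] [LocallyCompactSpace X]
    [LocallyPathConnectedSpace X] {U : Set X} (hU : IsOpen U) (hUconn : IsConnected U) {b x : X}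
    (hb : b ∈ U) (hx : x ∈ U) :
    ∃ D ∈ 𝓝 x, IsCompact D ∧ IsConnected D ∧ b ∈ D ∧ D ⊆ U := by
  obtain ⟨N, hN, hxN, hNU⟩ := exists_compact_subset hU hx
  let W := connectedComponentIn (interior N) x
  have hWx : W ∈ 𝓝 x := connectedComponentIn_mem_nhds (isOpen_interior.mem_nhds hxN)
  have hWconn : IsConnected (closure W) := (isConnected_connectedComponentIn_iff.2 hxN).closure
  have hWN : closure W ⊆ N :=
    closure_minimal ((connectedComponentIn_subset _ _).trans interior_subset) hN.isClosed
  have hWcompact : IsCompact (closure W) := hN.of_isClosed_subset isClosed_closure hWN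
  obtain ⟨q, hq⟩ := (hU.isConnected_iff_isPathConnected.1 hUconn).joinedIn b hb x hx
  have hxq : x ∈ range q ∩ closure W := ⟨⟨1, q.target⟩, subset_closure (mem_of_mem_nhds hWx)⟩
  exact ⟨range q ∪ closure W,
    Filter.mem_of_superset hWx (subset_closure.trans subset_union_right),
    (isCompact_range q.continuous).union hWcompact,
    (isConnected_range q.continuous).union ⟨x, hxq⟩ hWconn, .inl ⟨0, q.source⟩,
    union_subset (range_subset_iff.2 hq) (hWN.trans hNU)⟩

theorem exists_isCompact_isConnected_superset [T2Space X] [LocallyCompactSpace X]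
    [LocallyPathConnectedSpace X] {U C : Set X} (hU : IsOpen U) (hUconn : IsConnected U)
    (hC : IsCompact C) (hCU : C ⊆ U) :
    ∃ D, IsCompact D ∧ IsConnected D ∧ C ⊆ D ∧ D ⊆ U := by
  obtain ⟨b, hbU⟩ := hUconn.nonempty
  suffices ∃ D, IsCompact D ∧ IsConnected D ∧ b ∈ D ∧ C ⊆ D ∧ D ⊆ U by
    obtain ⟨D, hD, hDconn, -, hCD, hDU⟩ := this
    exact ⟨D, hD, hDconn, hCD, hDU⟩
  refine hC.induction_on
    (p := fun S => ∃ D, IsCompact D ∧ IsConnected D ∧ b ∈ D ∧ S ⊆ D ∧ D ⊆ U) ?_ ?_ ?_ ?_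
  · exact ⟨{b}, isCompact_singleton, isConnected_singleton, rfl, empty_subset _,
      singleton_subset_iff.2 hbU⟩
  · rintro S T hST ⟨D, hD, hDconn, hb, hTD, hDU⟩
    exact ⟨D, hD, hDconn, hb, hST.trans hTD, hDU⟩
  · rintro S T ⟨D, hD, hDconn, hbD, hSD, hDU⟩ ⟨D', hD', hDconn', hbD', hTD', hDU'⟩
    exact ⟨D ∪ D', hD.union hD', hDconn.union ⟨b, hbD, hbD'⟩ hDconn', .inl hbD,
      union_subset_union hSD hTD', union_subset hDU hDU'⟩
  · intro x hx
    obtain ⟨D, hDx, hD, hDconn, hbD, hDU⟩ :=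
      exists_isCompact_isConnected_mem_nhds hU hUconn hbU (hCU hx)
    exact ⟨D, mem_nhdsWithin_of_mem_nhds hDx, D, hD, hDconn, hbD, subset_rfl, hDU⟩

end Components

section NormedSpace

variable {E : Type*} [NormedAddCommGroup E] [NormedSpace ℝ E]

theorem isConnected_compl_ball_of_one_lt_rank (h : 1 < Module.rank ℝ E) (x : E) (r : ℝ) :
    IsConnected (Metric.ball x r)ᶜ := by
  have hpolar : (fun q : ℝ × E => x + q.1 • q.2) '' (Ici r ×ˢ Metric.sphere 0 1) =
      (Metric.ball x r)ᶜ := by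
    ext y
    constructor
    · rintro ⟨⟨t, v⟩, ⟨ht, hv⟩, rfl⟩
      have hdist : dist (x + t • v) x = |t| := by
        simp [dist_eq_norm, norm_smul, mem_sphere_zero_iff_norm.1 hv]
      simpa [hdist] using (mem_Ici.1 ht).trans (le_abs_self t)
    · intro hy
      have hry : r ≤ ‖y - x‖ := by simpa [dist_eq_norm] using hy
      obtain ⟨v, hv, hyv⟩ : ∃ v ∈ Metric.sphere (0 : E) 1, ‖y - x‖ • v = y - x := by
        rcases eq_or_ne (y - x) 0 with hyx | hyx
        · obtain ⟨v, hv⟩ := (isConnected_sphere h (0 : E) zero_le_one).nonempty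
          exact ⟨v, hv, by simp [hyx]⟩
        · exact ⟨NormedSpace.normalize (y - x),
            mem_sphere_zero_iff_norm.2 (NormedSpace.norm_normalize hyx),
            NormedSpace.norm_smul_normalize _⟩
      exact ⟨(‖y - x‖, v), ⟨hry, hv⟩, by simp [hyv]⟩
  rw [← hpolar]
  exact (isConnected_Ici.prod (isConnected_sphere h 0 zero_le_one)).image _ (by fun_prop)

theorem isConnected_compl_of_forall_not_isBounded_connectedComponentIn
    (h : 1 < Module.rank ℝ E) {K : Set E} (hK : Bornology.IsBounded K)
    (hcomp : ∀ x ∉ K, ¬ Bornology.IsBounded (connectedComponentIn Kᶜ x)) :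
    IsConnected Kᶜ := by
  obtain ⟨R, hKR⟩ := hK.subset_ball 0
  have hext : (Metric.ball (0 : E) R)ᶜ ⊆ Kᶜ := compl_subset_compl.2 hKR
  have hconn := isConnected_compl_ball_of_one_lt_rank h 0 R
  obtain ⟨b, hb⟩ := hconn.nonempty
  refine ⟨⟨b, hext hb⟩, isPreconnected_of_forall b fun y hy => ?_⟩
  obtain ⟨w, hw, hwR⟩ : ∃ w ∈ connectedComponentIn Kᶜ y, w ∉ Metric.ball 0 R :=
    not_subset.1 fun hsub => hcomp y hy (Metric.isBounded_ball.subset hsub)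
  exact ⟨connectedComponentIn Kᶜ y ∪ (Metric.ball 0 R)ᶜ,
    union_subset (connectedComponentIn_subset _ _) hext, .inr hb,
    .inl (mem_connectedComponentIn hy),
    isPreconnected_connectedComponentIn.union w hw hwR hconn.isPreconnected⟩

theorem exists_isOpen_isConnected_isConnected_compl [ProperSpace E] (h : 1 < Module.rank ℝ E)
    {K Ω : Set E} (hK : IsCompact K) (hKconn : IsConnected K) (hKcompl : IsConnected Kᶜ)
    (hΩ : IsOpen Ω) (hKΩ : K ⊆ Ω) :
    ∃ V, IsOpen V ∧ IsConnected V ∧ K ⊆ V ∧ V ⊆ Ω ∧ IsConnected Vᶜ := by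
  obtain ⟨R, hR, hKR⟩ := hK.isBounded.subset_ball_lt 0 0
  obtain ⟨D, hDc, hDconn, hCD, hDK⟩ :=
    exists_isCompact_isConnected_superset hK.isClosed.isOpen_compl hKcompl
      ((isCompact_closedBall 0 R).diff (hΩ.inter Metric.isOpen_ball))
      (fun z hz hzK => hz.2 ⟨hKΩ hzK, hKR hzK⟩)
  have hsphere : Metric.sphere 0 R ⊆ D := fun z hz =>
    hCD ⟨Metric.sphere_subset_closedBall hz, fun hzΩ => (Metric.mem_ball.1 hzΩ.2).ne hz⟩
  obtain ⟨b, hb⟩ := (isConnected_sphere h (0 : E) hR.le).nonempty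
  let L := D ∪ (Metric.ball 0 R)ᶜ
  have hLclosed : IsClosed L := hDc.isClosed.union Metric.isOpen_ball.isClosed_compl
  have hLconn : IsConnected L :=
    hDconn.union ⟨b, hsphere hb, fun hbR => (Metric.mem_ball.1 hbR).ne hb⟩
      (isConnected_compl_ball_of_one_lt_rank h 0 R)
  have hLK : K ⊆ Lᶜ :=
    fun z hz hzL => hzL.elim (fun hzD => hDK hzD hz) fun hzR => hzR (hKR hz)
  have hLΩ : Lᶜ ⊆ Ω := by
    intro z hz
    obtain ⟨hzD, hzR⟩ : z ∉ D ∧ z ∈ Metric.ball 0 R := by simpa [L] using hz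
    by_contra hzΩ
    exact hzD (hCD ⟨Metric.ball_subset_closedBall hzR, fun h => hzΩ h.1⟩)
  obtain ⟨x, hx⟩ := hKconn.nonempty
  exact ⟨connectedComponentIn Lᶜ x, hLclosed.isOpen_compl.connectedComponentIn,
    isConnected_connectedComponentIn_iff.2 (hLK hx),
    hKconn.isPreconnected.subset_connectedComponentIn hx hLK,
    (connectedComponentIn_subset _ _).trans hLΩ,
    isConnected_compl_connectedComponentIn_compl hLclosed hLconn x⟩

end NormedSpace

section Logarithm

theorem exists_continuous_exp_comp_eq {X : Type*} [TopologicalSpace X] [SimplyConnectedSpace X]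
    [LocallyPathConnectedSpace X] {f : X → ℂ} (hf : Continuous f) (hf₀ : ∀ x, f x ≠ 0) :
    ∃ l : X → ℂ, Continuous l ∧ ∀ x, Complex.exp (l x) = f x := by
  obtain ⟨x₀⟩ : Nonempty X := inferInstance
  obtain ⟨l, ⟨-, hl⟩, -⟩ := Complex.isCoveringMapOn_exp.existsUnique_continuousMap_lifts
    ⟨f, hf⟩ (Complex.exp_log (hf₀ x₀)) hf₀
  exact ⟨l, l.continuous, congrFun hl⟩

theorem not_exists_continuousOn_exp_eq_sub_sphere (p : ℂ) {r : ℝ} (hr : 0 < r) :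
    ¬ ∃ l : ℂ → ℂ, ContinuousOn l (Metric.sphere p r) ∧
      ∀ z ∈ Metric.sphere p r, Complex.exp (l z) = z - p := by
  rintro ⟨l, hl, hexp⟩
  have hmem (θ : ℝ) : circleMap p r θ ∈ Metric.sphere p r := circleMap_mem_sphere p hr.le θ
  have hcont : Continuous fun θ : ℝ => l (circleMap p r θ) :=
    hl.comp_continuous (continuous_circleMap p r) hmem
  have hexp_const (θ : ℝ) : Complex.exp (l (circleMap p r θ) - θ * Complex.I) = r := by
    rw [Complex.exp_sub, hexp _ (hmem θ), circleMap_sub_center, circleMap_zero,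
      mul_div_cancel_right₀ _ (Complex.exp_ne_zero _)]
  have hturn := Complex.isCoveringMap_exp.const_of_comp
    (g := fun θ : ℝ => l (circleMap p r θ) - θ * Complex.I) (hcont.sub (by fun_prop))
    (fun θ θ' => Subtype.ext ((hexp_const θ).trans (hexp_const θ').symm)) (2 * Real.pi) 0
  have hperiod : circleMap p r (2 * Real.pi) = circleMap p r 0 := by
    simpa using periodic_circleMap p r 0
  simp only [hperiod] at hturn
  exact Complex.two_pi_I_ne_zero (by push_cast at hturn; linear_combination -hturn)

theorem exists_continuous_ne_zero_eqOn_compl {X : Type*} [TopologicalSpace X] [NormalSpace X]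
    {K U : Set X} (hK : IsClosed K) (hU : frontier U ⊆ K) {f : X → ℂ} (hf : Continuous f)
    (hf₀ : ∀ x ∉ U, f x ≠ 0) {l : K → ℂ} (hl : Continuous l)
    (hexp : ∀ x : K, Complex.exp (l x) = f x) :
    ∃ g : X → ℂ, Continuous g ∧ (∀ x, g x ≠ 0) ∧ EqOn g f Uᶜ := by
  classical
  obtain ⟨m, hm⟩ := ContinuousMap.exists_restrict_eq hK ⟨l, hl⟩
  refine ⟨U.piecewise (fun x => Complex.exp (m x)) f, ?_, fun x => ?_, U.piecewise_eqOn_compl _ _⟩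
  · refine Continuous.piecewise (fun x hx => ?_) (by fun_prop) hf
    rw [← hexp ⟨x, hU hx⟩]
    exact congrArg Complex.exp (DFunLike.congr_fun hm ⟨x, hU hx⟩)
  · by_cases hx : x ∈ U
    · simp [hx, Complex.exp_ne_zero]
    · simpa [hx] using hf₀ x hx

theorem not_isBounded_connectedComponentIn_compl_of_exp_eq_sub {K : Set ℂ} (hK : IsClosed K)
    {p : ℂ} (hp : p ∉ K) {l : K → ℂ} (hl : Continuous l)
    (hexp : ∀ z : K, Complex.exp (l z) = z - p) :
    ¬ Bornology.IsBounded (connectedComponentIn Kᶜ p) := by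
  intro hbdd
  have hpU : p ∈ connectedComponentIn Kᶜ p := mem_connectedComponentIn hp
  have hfrontier : frontier (connectedComponentIn Kᶜ p) ⊆ K := by
    simpa using frontier_connectedComponentIn_subset_compl hK.isOpen_compl p
  obtain ⟨f, hf, hf₀, hfeq⟩ := exists_continuous_ne_zero_eqOn_compl hK hfrontier
    (f := fun z => z - p) (by fun_prop) (fun z hz => sub_ne_zero.2 fun h => hz (h ▸ hpU)) hl hexp
  obtain ⟨m, hm, hmexp⟩ := exists_continuous_exp_comp_eq hf hf₀
  obtain ⟨r, hr, hUr⟩ := hbdd.subset_ball_lt 0 p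
  refine not_exists_continuousOn_exp_eq_sub_sphere p hr ⟨m, hm.continuousOn, fun z hz => ?_⟩
  rw [hmexp]
  exact hfeq fun hzU => (Metric.mem_ball.1 (hUr hzU)).ne hz

end Logarithm

section Plane

theorem isConnected_compl_of_isSimplyConnected {K : Set ℂ} (hK : IsCompact K)
    (hKsc : IsSimplyConnected K) (hKlpc : LocallyPathConnectedSpace K) : IsConnected Kᶜ := by
  have := hKsc.simplyConnectedSpace
  refine isConnected_compl_of_forall_not_isBounded_connectedComponentIn
    (by simp) hK.isBounded fun p hp => ?_
  obtain ⟨l, hl, hexp⟩ := exists_continuous_exp_comp_eq (f := fun z : K => (z : ℂ) - p)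
    (by fun_prop) fun z => sub_ne_zero.2 fun h => hp (h ▸ z.2)
  exact not_isBounded_connectedComponentIn_compl_of_exp_eq_sub hK.isClosed hp hl hexp

variable {E : Type*} [NormedAddCommGroup E] [NormedSpace ℝ E]

theorem isConnected_compl_of_isSimplyConnected_of_finrank_eq_two (hE : Module.finrank ℝ E = 2)
    {K : Set E} (hK : IsCompact K) (hKsc : IsSimplyConnected K)
    (hKlpc : LocallyPathConnectedSpace K) : IsConnected Kᶜ := by
  have := Module.finite_of_finrank_eq_succ hE
  let e : E ≃ₜ ℂ := (ContinuousLinearEquiv.ofFinrankEq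
    (hE.trans Complex.finrank_real_complex.symm)).toHomeomorph
  have hconn : IsConnected (e '' K)ᶜ :=
    isConnected_compl_of_isSimplyConnected (hK.image e.continuous)
      (e.isSimplyConnected_image.2 hKsc) (e.image K).symm.isOpenEmbedding.locallyPathConnectedSpace
  rwa [← e.image_compl, e.isConnected_image] at hconn

theorem stmt_10_general (hE : Module.finrank ℝ E = 2) {Ω : Set E} (hΩ : IsOpen Ω) {K : Set E}
    (hK : IsCompact K) (hKsc : IsSimplyConnected K) (hKlpc : LocallyPathConnectedSpace K)
    (hKΩ : K ⊆ Ω) :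
    ∃ V, IsOpen V ∧ IsConnected V ∧ K ⊆ V ∧ V ⊆ Ω ∧ IsConnected Vᶜ := by
  have := Module.finite_of_finrank_eq_succ hE
  have := FiniteDimensional.proper_real E
  exact exists_isOpen_isConnected_isConnected_compl
    (by rw [← Module.finrank_eq_rank, hE]; norm_num)
    hK hKsc.isPathConnected.isConnected
    (isConnected_compl_of_isSimplyConnected_of_finrank_eq_two hE hK hKsc hKlpc) hΩ hKΩ

end Plane

namespace IsArc

variable {α : Type*} [TopologicalSpace α] {J : Set α}

variable [T2Space α]

theorem nonempty_homeomorph (hJ : IsArc J) : Nonempty (Icc (0 : ℝ) 1 ≃ₜ J) := by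
  obtain ⟨_, _, γ, hγ, hinj, rfl, -, -⟩ := hJ
  have hemb : IsClosedEmbedding ((Icc 0 1).domRestrict γ) :=
    hγ.domRestrict.isClosedEmbedding hinj.injective
  exact ⟨hemb.isEmbedding.toHomeomorph.trans (.setCongr (range_domRestrict γ _))⟩

theorem isSimplyConnected (hJ : IsArc J) : IsSimplyConnected J := by
  obtain ⟨e⟩ := hJ.nonempty_homeomorph
  have := (convex_Icc (0 : ℝ) 1).contractibleSpace (nonempty_Icc.2 zero_le_one)
  exact e.symm.toHomotopyEquiv.simplyConnectedSpace

theorem locallyPathConnectedSpace (hJ : IsArc J) : LocallyPathConnectedSpace J := by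
  obtain ⟨e⟩ := hJ.nonempty_homeomorph
  have := (convex_Icc (0 : ℝ) 1).locallyPathConnectedSpace
  exact e.symm.isOpenEmbedding.locallyPathConnectedSpace

end IsArc

/-- A connected open `Ω ⊆ ℝ²` containing an arc `J` contains a connected open
neighborhood `V` of `J` whose complement in `ℝ²` is connected. -/
theorem stmt_10 (Ω : Set (Fin 2 → ℝ)) (hΩopen : IsOpen Ω) (hΩconn : IsConnected Ω)
    (J : Set (Fin 2 → ℝ)) (harc : IsArc J) (hsub : J ⊆ Ω) :
    ∃ V : Set (Fin 2 → ℝ), IsOpen V ∧ IsConnected V ∧ J ⊆ V ∧ V ⊆ Ω ∧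
      IsConnected Vᶜ := by
  exact stmt_10_general (by simp) hΩopen harc.isCompact harc.isSimplyConnected
    harc.locallyPathConnectedSpace hsub

end
end

section
/- Let Y be a compact set in ℂ^N, let x₀ be a point of Y, let ε > 0, and let {p_j}_{j∈ℕ} be a countable collection of polynomials in z₁,…,z_N on ℂ^N such that p_j(x₀) ≠ 0 for all j. Then there exists a totally disconnected, compact, polynomially convex set E with x₀ ∈ E ⊆ Y ⊆ ℂ^N such that (i) each p_j is zero-free on E, and (ii) m(Y \ E) < ε. -/
open Set MvPolynomial Topology MeasureTheory

noncomputable section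

/-!
Discard from `Y` the zeros of the `p j`, a null set, and all real hyperplanes `Re (iⁿ zₖ) = d`,
`d ∈ ℚ`, that miss `x₀`; a compact part of almost full measure remains, and `x₀` may be
put back. On the resulting compact set `E` any two points lie on opposite sides of a discarded
hyperplane, so `E` is totally disconnected. For such a hyperplane `{Re w = 0}`, the spectrum of
`w` in the closed algebra `P(E)` generated by the polynomials is obtained from `w(E)` by filling in
some bounded components of the complement, hence misses the imaginary axis. The rational functions
`(w+1)ⁿ / ((w+1)ⁿ + (w-1)ⁿ)` of `w` therefore belong to `P(E)`, and they converge uniformly to the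
indicator function of `{Re w > 0}`. These real-valued functions separate points, so
Stone–Weierstrass gives `P(E) = C(E)`, and `E` is polynomially convex.
-/

/-! ### Null sets -/

section NullSets

lemma measure_eq_zero_of_forall_line {V : Type*} [NormedAddCommGroup V] [NormedSpace ℝ V]
    [FiniteDimensional ℝ V] [MeasurableSpace V] [BorelSpace V] (μ : Measure V)
    [μ.IsAddHaarMeasure] {s : Set V} (hs : MeasurableSet s) (x₀ : V)
    (h : ∀ v : V, volume {t : ℝ | x₀ + t • v ∈ s} = 0) : μ s = 0 := by
  have hmeas : MeasurableSet {x : V × ℝ | x₀ + x.2 • x.1 ∉ s} :=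
    (hs.preimage (by fun_prop : Measurable fun x : V × ℝ => x₀ + x.2 • x.1)).compl
  have hlines : ∀ᵐ v ∂μ, ∀ᵐ t : ℝ, x₀ + t • v ∉ s :=
    .of_forall fun v => by simpa only [ae_iff, not_not] using h v
  rw [Measure.ae_ae_comm hmeas] at hlines
  obtain ⟨t, ht, ht0⟩ := (hlines.and (Measure.ae_ne volume (0 : ℝ))).exists
  have hpre : μ ((t • ·) ⁻¹' ((x₀ + ·) ⁻¹' s)) = 0 := measure_eq_zero_iff_ae_notMem.2 ht
  rw [Measure.addHaar_preimage_smul _ ht0, measure_preimage_add] at hpre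
  simpa [ht0] using hpre

lemma measure_setOf_eq_zero_of_analyticOnNhd {V F : Type*} [NormedAddCommGroup V]
    [NormedSpace ℝ V] [FiniteDimensional ℝ V] [MeasurableSpace V] [BorelSpace V] (μ : Measure V)
    [μ.IsAddHaarMeasure] [NormedAddCommGroup F] [NormedSpace ℝ F] {f : V → F}
    (hf : AnalyticOnNhd ℝ f univ) {x₀ : V} (hx₀ : f x₀ ≠ 0) : μ {x | f x = 0} = 0 := by
  have hclosed : IsClosed {x | f x = 0} :=
    isClosed_singleton.preimage (continuousOn_univ.1 hf.continuousOn)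
  refine measure_eq_zero_of_forall_line μ hclosed.measurableSet x₀ fun v => ?_
  have hline : AnalyticOnNhd ℝ (fun t : ℝ => f (x₀ + t • v)) univ :=
    fun t _ => (hf _ trivial).comp (g := f) (f := fun t : ℝ => x₀ + t • v) (by fun_prop)
  have hcodisc : ∀ᶠ t in Filter.codiscrete ℝ, f (x₀ + t • v) ≠ 0 :=
    hline.preimage_zero_mem_codiscrete (x := 0) (by simpa using hx₀)
  refine measure_eq_zero_iff_ae_notMem.2 ?_
  rw [← Measure.restrict_univ (μ := (volume : Measure ℝ))]
  exact ae_restrict_le_codiscreteWithin MeasurableSet.univ hcodisc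

lemma volume_setOf_eval_eq_zero {σ : Type*} [Fintype σ] {p : MvPolynomial σ ℂ} {x₀ : σ → ℂ}
    (hp : eval x₀ p ≠ 0) : volume {x | eval x p = 0} = 0 :=
  measure_setOf_eq_zero_of_analyticOnNhd volume (AnalyticOnNhd.eval_mvPolynomial p).restrictScalars
    hp

lemma exists_isCompact_mem_subset_sdiff_null {α : Type*} [TopologicalSpace α] [T2Space α]
    [MeasurableSpace α] [OpensMeasurableSpace α] {μ : Measure α} [μ.InnerRegularCompactLTTop]
    {Y Z : Set α} (hY : NullMeasurableSet Y μ) (hYfin : μ Y ≠ ⊤) (hZ : μ Z = 0) {x₀ : α}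
    (hx₀ : x₀ ∈ Y \ Z) {ε : ENNReal} (hε : ε ≠ 0) :
    ∃ E ⊆ Y \ Z, IsCompact E ∧ x₀ ∈ E ∧ μ (Y \ E) < ε := by
  obtain ⟨T, hTY, hT, hTae⟩ :=
    (hY.diff (NullMeasurableSet.of_null hZ)).exists_measurable_subset_ae_eq
  have hTfin : μ T ≠ ⊤ := measure_ne_top_of_subset (hTY.trans sdiff_subset) hYfin
  obtain ⟨K, hKT, hK, hKε⟩ := hT.exists_isCompact_sdiff_lt hTfin hε
  have hYT : Y =ᵐ[μ] T := ((sdiff_null_ae_eq_self hZ).symm).trans hTae.symm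
  refine ⟨insert x₀ K, insert_subset hx₀ (hKT.trans hTY), hK.insert x₀, mem_insert _ _, ?_⟩
  calc μ (Y \ insert x₀ K) ≤ μ (Y \ K) :=
        measure_mono (sdiff_subset_sdiff_right (subset_insert _ _))
    _ = μ (T \ K) := measure_congr (hYT.diff (ae_eq_refl K))
    _ < ε := hKε

end NullSets

/-! ### Closed subalgebras of `C(K, ℂ)` -/

section ClosedSubalgebras

lemma disjoint_spectrum_subalgebra_of_isPreconnected {B : Type*} [NormedRing B]
    [NormedAlgebra ℂ B] [CompleteSpace B] (S : Subalgebra ℂ B) [IsClosed (S : Set B)] (x : S)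
    {U : Set ℂ} (hU : IsPreconnected U) (hunbdd : ¬ Bornology.IsBounded U)
    (hdisj : Disjoint U (spectrum ℂ (x : B))) : Disjoint U (spectrum ℂ x) := by
  refine disjoint_left.2 fun z hzU hz => hunbdd ?_
  exact (Subalgebra.spectrum_isBounded_connectedComponentIn S x hz).subset
    (hU.subset_connectedComponentIn hzU hdisj.subset_compl_right)

lemma isPreconnected_setOf_re_eq_zero : IsPreconnected {z : ℂ | z.re = 0} :=
  (convex_hyperplane Complex.reLm.isLinear 0).isPreconnected

lemma not_isBounded_setOf_re_eq_zero : ¬ Bornology.IsBounded {z : ℂ | z.re = 0} := by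
  intro hbdd
  obtain ⟨C, hC⟩ := hbdd.exists_norm_le
  have hle := hC ((|C| + 1 : ℝ) * Complex.I) (by simp)
  rw [norm_mul, Complex.norm_I, mul_one, Complex.norm_real, Real.norm_eq_abs] at hle
  linarith [le_abs_self (|C| + 1), le_abs_self C]

lemma norm_add_one_sq_sub_norm_sub_one_sq (z : ℂ) :
    ‖z + 1‖ ^ 2 - ‖z - 1‖ ^ 2 = 4 * z.re := by
  simp only [← Complex.normSq_eq_norm_sq, Complex.normSq_apply, Complex.add_re, Complex.add_im,
    Complex.sub_re, Complex.sub_im, Complex.one_re, Complex.one_im]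
  ring

lemma norm_sub_one_lt_norm_add_one_iff {z : ℂ} : ‖z - 1‖ < ‖z + 1‖ ↔ 0 < z.re := by
  rw [← sq_lt_sq₀ (norm_nonneg _) (norm_nonneg _), ← sub_pos,
    norm_add_one_sq_sub_norm_sub_one_sq]
  simp

lemma norm_sub_one_eq_norm_add_one_iff {z : ℂ} : ‖z - 1‖ = ‖z + 1‖ ↔ z.re = 0 := by
  rw [← sq_eq_sq₀ (norm_nonneg _) (norm_nonneg _), eq_comm, ← sub_eq_zero,
    norm_add_one_sq_sub_norm_sub_one_sq]
  simp

lemma add_one_pow_add_sub_one_pow_ne_zero {z : ℂ} (hz : z.re ≠ 0) {n : ℕ} (hn : n ≠ 0) :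
    (z + 1) ^ n + (z - 1) ^ n ≠ 0 := fun h => hz <| norm_sub_one_eq_norm_add_one_iff.1 <| by
  have hpow : ‖z + 1‖ ^ n = ‖z - 1‖ ^ n := by
    rw [← norm_pow, ← norm_pow, eq_neg_of_add_eq_zero_left h, norm_neg]
  exact ((pow_left_inj₀ (norm_nonneg _) (norm_nonneg _) hn).1 hpow).symm

lemma norm_div_add_le {𝕜 : Type*} [NormedField 𝕜] {a b : 𝕜} {r : ℝ} (hr₀ : 0 ≤ r) (hr : r < 1)
    (h : ‖b‖ ≤ r * ‖a‖) : ‖b / (a + b)‖ ≤ r / (1 - r) := by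
  have hr' : 0 < 1 - r := sub_pos.2 hr
  have hsum : ‖a‖ - ‖b‖ ≤ ‖a + b‖ := by simpa using norm_sub_norm_le a (-b)
  rw [norm_div]
  refine div_le_of_le_mul₀ (norm_nonneg _) (div_nonneg hr₀ hr'.le) ?_
  rw [div_mul_eq_mul_div, le_div_iff₀ hr']
  linarith [mul_le_mul_of_nonneg_left hsum hr₀]

lemma exists_forall_min_le_mul_max {K 𝕜 : Type*} [TopologicalSpace K] [CompactSpace K]
    [NormedField 𝕜] {f g : C(K, 𝕜)} (h : ∀ x, ‖f x‖ ≠ ‖g x‖) :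
    ∃ r, 0 ≤ r ∧ r < 1 ∧ ∀ x, min ‖f x‖ ‖g x‖ ≤ r * max ‖f x‖ ‖g x‖ := by
  have hmin : ∀ x, 0 ≤ min ‖f x‖ ‖g x‖ := fun x => le_min (norm_nonneg _) (norm_nonneg _)
  have hmax : ∀ x, 0 < max ‖f x‖ ‖g x‖ := fun x => (hmin x).trans_lt (min_lt_max.2 (h x))
  let ratio : C(K, ℝ) := ⟨fun x => min ‖f x‖ ‖g x‖ / max ‖f x‖ ‖g x‖,
    by fun_prop (disch := exact fun x => (hmax x).ne')⟩
  refine ⟨‖ratio‖, norm_nonneg _, (ContinuousMap.norm_lt_iff _ one_pos).2 fun x => ?_, fun x => ?_⟩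
  · have hratio : ‖ratio x‖ = ratio x := Real.norm_of_nonneg (div_nonneg (hmin x) (hmax x).le)
    exact hratio.trans_lt <| (div_lt_one (hmax x)).2 (min_lt_max.2 (h x))
  · rw [← div_le_iff₀ (hmax x)]
    exact (le_abs_self _).trans (ratio.norm_coe_le_norm x)

lemma norm_pow_div_add_pow_sub_ite_le {𝕜 : Type*} [NormedField 𝕜] {a b : 𝕜} {r : ℝ}
    (hr₀ : 0 ≤ r) (hr : r < 1) (h : min ‖a‖ ‖b‖ ≤ r * max ‖a‖ ‖b‖) {n : ℕ} (hn : n ≠ 0) :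
    ‖a ^ n / (a ^ n + b ^ n) - if ‖b‖ < ‖a‖ then 1 else 0‖ ≤ r ^ n / (1 - r ^ n) := by
  have hrn₀ : 0 ≤ r ^ n := pow_nonneg hr₀ n
  have hrn : r ^ n < 1 := pow_lt_one₀ hr₀ hr hn
  have hpow {c d : 𝕜} (hcd : ‖c‖ ≤ r * ‖d‖) : ‖c ^ n‖ ≤ r ^ n * ‖d ^ n‖ := by
    rw [norm_pow, norm_pow, ← mul_pow]
    gcongr
  split_ifs with hlt
  · rw [min_eq_right hlt.le, max_eq_left hlt.le] at h
    have hne : a ^ n + b ^ n ≠ 0 := fun h0 => by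
      have heq : ‖a ^ n‖ = ‖b ^ n‖ := by rw [eq_neg_of_add_eq_zero_left h0, norm_neg]
      rw [norm_pow, norm_pow] at heq
      exact (pow_lt_pow_left₀ hlt (norm_nonneg _) hn).ne' heq
    rw [show a ^ n / (a ^ n + b ^ n) - 1 = -(b ^ n / (a ^ n + b ^ n)) by field_simp; ring, norm_neg]
    exact norm_div_add_le hrn₀ hrn (hpow h)
  · rw [min_eq_left (not_lt.1 hlt), max_eq_right (not_lt.1 hlt)] at h
    rw [sub_zero, add_comm]
    exact norm_div_add_le hrn₀ hrn (hpow h)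

variable {K : Type*} [TopologicalSpace K] {A : Subalgebra ℂ C(K, ℂ)}

lemma isClopen_setOf_re_pos {w : C(K, ℂ)} (hw : ∀ x, (w x).re ≠ 0) :
    IsClopen {x | 0 < (w x).re} := by
  have hre : Continuous fun x => (w x).re := by fun_prop
  have heq : {x | 0 < (w x).re} = {x | 0 ≤ (w x).re} :=
    ext fun x => (hw x).symm.le_iff_lt.symm
  exact ⟨heq ▸ isClosed_le continuous_const hre, isOpen_lt continuous_const hre⟩

/-- Any two points of `K` are strictly separated by the imaginary axis under some `w ∈ A` whose
range misses that axis. It forces `K` to be totally separated and `A` to be dense. -/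
def SeparatesByImaginaryAxis (A : Subalgebra ℂ C(K, ℂ)) : Prop :=
  ∀ x y, x ≠ y → ∃ w ∈ A, (∀ z, (w z).re ≠ 0) ∧ (w x).re < 0 ∧ 0 < (w y).re

lemma SeparatesByImaginaryAxis.totallySeparatedSpace (h : SeparatesByImaginaryAxis A) :
    TotallySeparatedSpace K := by
  refine totallySeparatedSpace_iff_exists_isClopen.2 fun x y hxy => ?_
  obtain ⟨w, -, hw, hy, hx⟩ := h y x hxy.symm
  exact ⟨_, isClopen_setOf_re_pos hw, hx, hy.not_gt⟩

lemma charFn_setOf_re_pos_apply {w : C(K, ℂ)} (hw : ∀ x, (w x).re ≠ 0) (x : K) :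
    (LocallyConstant.charFn ℂ (isClopen_setOf_re_pos hw) : C(K, ℂ)) x =
      if 0 < (w x).re then 1 else 0 := by
  rw [LocallyConstant.coe_continuousMap, LocallyConstant.coe_charFn, indicator_apply]
  rfl

variable [CompactSpace K]

lemma re_ne_zero_of_mem_spectrum (hA : IsClosed (A : Set C(K, ℂ))) (w : A)
    (hw : ∀ x, ((w : C(K, ℂ)) x).re ≠ 0) {z : ℂ} (hz : z ∈ spectrum ℂ w) : z.re ≠ 0 := by
  have hdisj : Disjoint {z : ℂ | z.re = 0} (spectrum ℂ (w : C(K, ℂ))) := by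
    rw [ContinuousMap.spectrum_eq_range, disjoint_right]
    exact forall_mem_range.2 hw
  exact disjoint_right.1 (disjoint_spectrum_subalgebra_of_isPreconnected A w
    isPreconnected_setOf_re_eq_zero not_isBounded_setOf_re_eq_zero hdisj) hz

lemma exists_mem_eq_eval_div_eval (hA : IsClosed (A : Set C(K, ℂ))) (w : A) (p : Polynomial ℂ)
    {q : Polynomial ℂ} (hq : ∀ z ∈ spectrum ℂ w, q.eval z ≠ 0) :
    ∃ f ∈ A, ∀ x, f x = p.eval ((w : C(K, ℂ)) x) / q.eval ((w : C(K, ℂ)) x) := by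
  have hunit : IsUnit (Polynomial.aeval w q) := by
    have : CompleteSpace A := hA.completeSpace_coe
    nontriviality A
    rw [← spectrum.zero_notMem_iff ℂ, spectrum.map_polynomial_aeval]
    rintro ⟨z, hz, hqz⟩
    exact hq z hz hqz
  have hval : ∀ (r : Polynomial ℂ) x,
      (Polynomial.aeval w r : C(K, ℂ)) x = r.eval ((w : C(K, ℂ)) x) := fun r x => by
    rw [Polynomial.aeval_subalgebra_coe, Polynomial.aeval_continuousMap_apply]
  obtain ⟨v, hv⟩ := hunit.exists_right_inv
  refine ⟨(Polynomial.aeval w p * v : A), SetLike.coe_mem _, fun x => ?_⟩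
  have hvx : q.eval ((w : C(K, ℂ)) x) * (v : C(K, ℂ)) x = 1 := by
    rw [← hval]
    exact congrArg (fun g : A => (g : C(K, ℂ)) x) hv
  rw [MulMemClass.coe_mul, ContinuousMap.mul_apply, hval, div_eq_mul_inv,
    eq_inv_of_mul_eq_one_right hvx]

lemma exists_mem_eq_pow_div (hA : IsClosed (A : Set C(K, ℂ))) {w : C(K, ℂ)} (hwA : w ∈ A)
    (hw : ∀ x, (w x).re ≠ 0) {n : ℕ} (hn : n ≠ 0) :
    ∃ f ∈ A, ∀ x, f x = (w x + 1) ^ n / ((w x + 1) ^ n + (w x - 1) ^ n) := by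
  have hq : ∀ z ∈ spectrum ℂ (⟨w, hwA⟩ : A),
      ((.X + 1) ^ n + (.X - 1) ^ n : Polynomial ℂ).eval z ≠ 0 := fun z hz => by
    simpa using add_one_pow_add_sub_one_pow_ne_zero (re_ne_zero_of_mem_spectrum hA _ hw hz) hn
  simpa using exists_mem_eq_eval_div_eval hA _ ((.X + 1) ^ n) hq

lemma charFn_setOf_re_pos_mem (hA : IsClosed (A : Set C(K, ℂ))) {w : C(K, ℂ)} (hwA : w ∈ A)
    (hw : ∀ x, (w x).re ≠ 0) :
    (LocallyConstant.charFn ℂ (isClopen_setOf_re_pos hw) : C(K, ℂ)) ∈ A := by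
  obtain ⟨r, hr₀, hr, hmin⟩ := exists_forall_min_le_mul_max (f := w + 1) (g := w - 1)
    fun x h => hw x (norm_sub_one_eq_norm_add_one_iff.1 h.symm)
  choose f hfA hf using fun n : ℕ => exists_mem_eq_pow_div hA hwA hw n.succ_ne_zero
  have hpow : Filter.Tendsto (fun n : ℕ => r ^ (n + 1)) Filter.atTop (𝓝 0) :=
    (Filter.tendsto_add_atTop_iff_nat 1).2 (tendsto_pow_atTop_nhds_zero_of_lt_one hr₀ hr)
  have hbound : Filter.Tendsto (fun n : ℕ => r ^ (n + 1) / (1 - r ^ (n + 1))) Filter.atTop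
      (𝓝 0) := by
    simpa [Pi.div_def] using hpow.div (tendsto_const_nhds (x := (1 : ℝ)).sub hpow) (by simp)
  refine hA.mem_of_tendsto (f := f) (b := Filter.atTop) ?_ (.of_forall hfA)
  refine tendsto_iff_dist_tendsto_zero.2 (squeeze_zero (fun _ => dist_nonneg) (fun n => ?_) hbound)
  have hrn : r ^ (n + 1) < 1 := pow_lt_one₀ hr₀ hr n.succ_ne_zero
  refine (ContinuousMap.dist_le (div_nonneg (by positivity) (sub_nonneg.2 hrn.le))).2 fun x => ?_
  rw [dist_eq_norm, hf, charFn_setOf_re_pos_apply hw]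
  simpa [norm_sub_one_lt_norm_add_one_iff] using
    norm_pow_div_add_pow_sub_ite_le hr₀ hr (hmin x) n.succ_ne_zero

lemma eq_top_of_isSelfAdjoint_separates (hA : IsClosed (A : Set C(K, ℂ)))
    (h : ∀ x y, x ≠ y → ∃ f ∈ A, IsSelfAdjoint f ∧ f x ≠ f y) : A = ⊤ := by
  let S : StarSubalgebra ℂ C(K, ℂ) := StarAlgebra.adjoin ℂ {f | f ∈ A ∧ IsSelfAdjoint f}
  have hSA : (S : Set C(K, ℂ)) ⊆ A := by
    change S.toSubalgebra ≤ A
    rw [StarAlgebra.adjoin_toSubalgebra, Algebra.adjoin_le_iff]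
    rintro f (⟨hf, -⟩ | ⟨hf, hfs⟩)
    · exact hf
    · rwa [← IsSelfAdjoint.star_iff.1 hfs]
  have hsep : S.SeparatesPoints := fun x y hxy => by
    obtain ⟨f, hfA, hfs, hfxy⟩ := h x y hxy
    exact ⟨f, ⟨f, StarAlgebra.subset_adjoin ℂ _ ⟨hfA, hfs⟩, rfl⟩, hfxy⟩
  have hdense := ContinuousMap.starSubalgebra_topologicalClosure_eq_top_of_separatesPoints S hsep
  refine eq_top_iff.2 fun f _ => ?_
  have hf : f ∈ S.topologicalClosure := hdense ▸ trivial
  exact closure_minimal hSA hA hf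

lemma SeparatesByImaginaryAxis.dense (h : SeparatesByImaginaryAxis A) :
    Dense (A : Set C(K, ℂ)) := by
  rw [dense_iff_closure_eq, ← Subalgebra.topologicalClosure_coe, ← Algebra.coe_top (R := ℂ)]
  have hclosed := A.isClosed_topologicalClosure
  refine congrArg _ (eq_top_of_isSelfAdjoint_separates hclosed fun x y hxy => ?_)
  obtain ⟨w, hwA, hw, hx, hy⟩ := h x y hxy
  refine ⟨_, charFn_setOf_re_pos_mem hclosed (A.le_topologicalClosure hwA) hw, ?_, ?_⟩
  · ext z
    rw [ContinuousMap.star_apply, charFn_setOf_re_pos_apply hw]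
    split_ifs <;> simp
  · simp only [charFn_setOf_re_pos_apply hw, hy, hx.not_gt, if_true, if_false, ne_eq, zero_ne_one,
      not_false_eq_true]

end ClosedSubalgebras

/-! ### Polynomials on compact sets -/

section Polynomials

lemma exists_sum_mul_eq_one {K 𝕜 ι : Type*} [TopologicalSpace K] [CompactSpace K] [T2Space K]
    [RCLike 𝕜] [Fintype ι] {g : ι → C(K, 𝕜)} (hg : ∀ x, ∃ i, g i x ≠ 0) :
    ∃ f : ι → C(K, 𝕜), ∑ i, f i * g i = 1 := by
  rw [← Ideal.mem_span_range_iff_exists_fun, ← Ideal.eq_top_iff_one]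
  by_contra hne
  obtain ⟨M, hM, hle⟩ := Ideal.exists_le_maximal _ hne
  obtain ⟨x, hx⟩ := ContinuousMap.setOfIdeal_eq_compl_singleton M
  obtain ⟨i, hi⟩ := hg x
  have hxM : x ∈ ContinuousMap.setOfIdeal M :=
    ContinuousMap.mem_setOfIdeal.2 ⟨g i, hle (Ideal.subset_span (mem_range_self i)), hi⟩
  simp [hx] at hxM

/-- The restriction of polynomials to `E`, whose range is dense in the algebra `P(E)`. -/
def evalOn {σ : Type*} (E : Set (σ → ℂ)) : MvPolynomial σ ℂ →ₐ[ℂ] C(E, ℂ) :=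
  aeval fun i => ⟨fun x => x.1 i, (continuous_apply i).comp continuous_subtype_val⟩

lemma evalOn_apply {σ : Type*} (E : Set (σ → ℂ)) (p : MvPolynomial σ ℂ) (x : E) :
    evalOn E p x = eval x.1 p := by
  induction p using MvPolynomial.induction_on with
  | C a => simp [evalOn]
  | add p q hp hq => simp [hp, hq]
  | mul_X p i hp => rw [map_mul, ContinuousMap.mul_apply, hp]; simp [evalOn]

variable {N : ℕ} {E : Set (Fin N → ℂ)}

lemma iSup_norm_eval_eq_norm_evalOn [CompactSpace E] (p : MvPolynomial (Fin N) ℂ) :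
    ⨆ x ∈ E, ‖eval x p‖ = ‖evalOn E p‖ := by
  have hle : ∀ x, ⨆ _ : x ∈ E, ‖eval x p‖ ≤ ‖evalOn E p‖ := fun x =>
    Real.iSup_le (fun hx => evalOn_apply E p ⟨x, hx⟩ ▸ (evalOn E p).norm_coe_le_norm ⟨x, hx⟩)
      (norm_nonneg _)
  refine le_antisymm (Real.iSup_le hle (norm_nonneg _)) ?_
  refine (ContinuousMap.norm_le _ ?_).2 fun x => ?_
  · exact Real.iSup_nonneg fun x => Real.iSup_nonneg fun _ => norm_nonneg _
  · rw [evalOn_apply]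
    refine le_ciSup_of_le ⟨_, forall_mem_range.2 hle⟩ x.1 ?_
    rw [ciSup_pos x.2]

lemma mem_polyHull_iff [CompactSpace E] {z : Fin N → ℂ} :
    z ∈ polyHull E ↔ ∀ p, ‖eval z p‖ ≤ ‖evalOn E p‖ := by
  simp only [polyHull, mem_ofPred_eq, iSup_norm_eval_eq_norm_evalOn]

lemma isPolynomiallyConvex_of_denseRange [CompactSpace E] (hdense : DenseRange (evalOn E)) :
    IsPolynomiallyConvex E := by
  refine Subset.antisymm (fun z hz => ?_) fun z hz => mem_polyHull_iff.2 fun p => ?_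
  · by_contra hzE
    let g : Fin N → C(E, ℂ) := fun k => evalOn E (X k - C (z k))
    have hg : ∀ x, ∃ k, g k x ≠ 0 := fun x => by
      obtain ⟨k, hk⟩ := Function.ne_iff.1 (ne_of_mem_of_not_mem x.2 hzE)
      exact ⟨k, by simpa [g, evalOn_apply, sub_ne_zero] using hk⟩
    obtain ⟨f, hf⟩ := exists_sum_mul_eq_one hg
    have hopen : IsOpen {f : Fin N → C(E, ℂ) | ‖1 - ∑ k, f k * g k‖ < 1} :=
      isOpen_lt (by fun_prop) continuous_const
    obtain ⟨p, hp⟩ := (DenseRange.piMap fun _ : Fin N => hdense).exists_mem_open hopen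
      ⟨f, by simp [hf]⟩
    let Q : MvPolynomial (Fin N) ℂ := 1 - ∑ k, p k * (X k - C (z k))
    have hQz : eval z Q = 1 := by simp [Q]
    have hQE : ‖evalOn E Q‖ < 1 := by simpa [Q, g] using hp
    have hle := mem_polyHull_iff.1 hz Q
    rw [hQz, norm_one] at hle
    exact hle.not_gt hQE
  · rw [← evalOn_apply E p ⟨z, hz⟩]
    exact (evalOn E p).norm_coe_le_norm _

end Polynomials

/-! ### Rational real hyperplanes -/

section Hyperplanes

variable {σ : Type*}

/-- The union of the real hyperplanes `Re (iⁿ zₖ) = d`, `d ∈ ℚ`, that do not pass through `x₀`.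
The factor `iⁿ` lets both half-planes bounded by a horizontal or vertical line be written as
`Re (iⁿ zₖ) > d`. -/
def rationalHyperplanesOff (x₀ : σ → ℂ) : Set (σ → ℂ) :=
  {x | ∃ (k : σ) (n : ℕ) (d : ℚ), (Complex.I ^ n * x₀ k).re ≠ d ∧ (Complex.I ^ n * x k).re = d}

lemma notMem_rationalHyperplanesOff (x₀ : σ → ℂ) : x₀ ∉ rationalHyperplanesOff x₀ :=
  fun ⟨_, _, _, hne, heq⟩ => hne heq

lemma volume_rationalHyperplanesOff [Fintype σ] (x₀ : σ → ℂ) :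
    volume (rationalHyperplanesOff x₀) = 0 := by
  simp only [rationalHyperplanesOff, ofPred_exists, measure_iUnion_null_iff]
  intro k n d
  by_cases hd : (Complex.I ^ n * x₀ k).re = d
  · simp [hd]
  let ℓ : (σ → ℂ) →L[ℝ] ℝ :=
    Complex.reCLM ∘L ContinuousLinearMap.mul ℝ ℂ (Complex.I ^ n) ∘L ContinuousLinearMap.proj k
  have hℓ : AnalyticOnNhd ℝ (fun x => ℓ x - d) univ :=
    (ℓ.analyticOnNhd univ).sub analyticOnNhd_const
  exact measure_mono_null (fun x hx => sub_eq_zero.2 hx.2)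
    (measure_setOf_eq_zero_of_analyticOnNhd volume hℓ (sub_ne_zero.2 hd))

lemma exists_re_I_pow_mul_lt {z w : ℂ} (h : z ≠ w) :
    ∃ n : ℕ, (Complex.I ^ n * z).re < (Complex.I ^ n * w).re := by
  by_cases hre : z.re = w.re
  · have him : z.im ≠ w.im := fun him => h (Complex.ext hre him)
    rcases him.lt_or_gt with hlt | hgt
    · exact ⟨3, by simpa [pow_succ] using hlt⟩
    · exact ⟨1, by simpa using hgt⟩
  · rcases lt_or_gt_of_ne hre with hlt | hgt
    · exact ⟨0, by simpa using hlt⟩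
    · exact ⟨2, by simpa using hgt⟩

lemma separatesByImaginaryAxis_of_disjoint {x₀ : σ → ℂ} {E : Set (σ → ℂ)}
    (hE : Disjoint E (rationalHyperplanesOff x₀)) :
    SeparatesByImaginaryAxis (evalOn E).range := by
  intro x y hxy
  obtain ⟨k, hk⟩ := Function.ne_iff.1 (Subtype.coe_injective.ne hxy)
  obtain ⟨n, hn⟩ := exists_re_I_pow_mul_lt hk
  obtain ⟨_, ⟨⟨d, rfl⟩, hd⟩, hxd, hdy⟩ :=
    (Rat.denseRange_cast.sdiff_singleton (Complex.I ^ n * x₀ k).re).exists_between hn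
  have hre : ∀ z : E, (evalOn E (C (Complex.I ^ n) * X k - C (d : ℂ)) z).re =
      (Complex.I ^ n * z.1 k).re - d := fun z => by
    simp [evalOn_apply]
  refine ⟨evalOn E (C (Complex.I ^ n) * X k - C (d : ℂ)), ⟨_, rfl⟩, fun z hz => ?_, ?_, ?_⟩
  · exact disjoint_left.1 hE z.2 ⟨k, n, d, Ne.symm hd, sub_eq_zero.1 ((hre z).symm.trans hz)⟩
  · exact (hre x).trans_lt (sub_neg.2 hxd)
  · exact (sub_pos.2 hdy).trans_eq (hre y).symm

end Hyperplanes

theorem stmt_12_general {N : ℕ} {Y Z : Set (Fin N → ℂ)} (hY : NullMeasurableSet Y)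
    (hYfin : volume Y ≠ ⊤) (hZ : volume Z = 0) {x₀ : Fin N → ℂ} (hx₀ : x₀ ∈ Y \ Z)
    {ε : ENNReal} (hε : ε ≠ 0) :
    ∃ E : Set (Fin N → ℂ), IsTotallyDisconnected E ∧ IsCompact E ∧ IsPolynomiallyConvex E ∧
      x₀ ∈ E ∧ E ⊆ Y \ Z ∧ volume (Y \ E) < ε := by
  obtain ⟨E, hEsub, hE, hx₀E, hvol⟩ := exists_isCompact_mem_subset_sdiff_null hY hYfin
    (measure_union_null hZ (volume_rationalHyperplanesOff x₀))
    ⟨hx₀.1, fun h => h.elim hx₀.2 (notMem_rationalHyperplanesOff x₀)⟩ hε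
  rw [← sdiff_sdiff] at hEsub
  have : CompactSpace E := isCompact_iff_compactSpace.1 hE
  have hsep := separatesByImaginaryAxis_of_disjoint (disjoint_sdiff_left.mono_left hEsub)
  have : TotallySeparatedSpace E := hsep.totallySeparatedSpace
  exact ⟨E, totallyDisconnectedSpace_subtype_iff.1 inferInstance, hE,
    isPolynomiallyConvex_of_denseRange hsep.dense, hx₀E, hEsub.trans sdiff_subset, hvol⟩

/-- Inside any compact `Y ⊆ ℂ^N` containing `x₀`, given countably many polynomials
nonvanishing at `x₀`, there is a totally disconnected compact polynomially convex set
`E ∋ x₀` of almost full measure in `Y` on which all the polynomials are zero-free. -/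
theorem stmt_12 (N : ℕ) (Y : Set (Fin N → ℂ)) (hY : IsCompact Y)
    (x₀ : Fin N → ℂ) (hx₀ : x₀ ∈ Y) (ε : ℝ) (hε : 0 < ε)
    (p : ℕ → MvPolynomial (Fin N) ℂ) (hp : ∀ j, eval x₀ (p j) ≠ 0) :
    ∃ E : Set (Fin N → ℂ), IsTotallyDisconnected E ∧ IsCompact E ∧
      IsPolynomiallyConvex E ∧ x₀ ∈ E ∧ E ⊆ Y ∧
      (∀ j, ∀ x ∈ E, eval x (p j) ≠ 0) ∧
      volume (Y \ E) < ENNReal.ofReal ε := by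
  obtain ⟨E, hdisc, hE, hconv, hx₀E, hEsub, hvol⟩ := stmt_12_general hY.nullMeasurableSet
    hY.measure_ne_top (measure_iUnion_null fun j => volume_setOf_eval_eq_zero (hp j))
    ⟨hx₀, by simpa using hp⟩ (ENNReal.ofReal_pos.2 hε).ne'
  exact ⟨E, hdisc, hE, hconv, hx₀E, hEsub.trans sdiff_subset,
    fun j x hx h0 => (hEsub hx).2 (mem_iUnion.2 ⟨j, h0⟩), hvol⟩

end
end
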